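/- Let n ≥ 2, m < n, p₀ ∈ (1, n/m), and let A be a Young function equivalent near zero to t^{p₀}(1 − log t)^{α₀} (α₀ ∈ ℝ) and near infinity to t^{p_∞}(1 + log t)^{α_∞} with p_∞ ∈ (1, n/m), α_∞ ∈ ℝ. Then there is C such that for every u ∈ V^m L^A(ℝⁿ) there is a unique polynomial P of degree at most m−1 with ‖u − P‖_{L^B(ℝⁿ)} ≤ C‖∇^m u‖_{L^A(ℝⁿ)}, where B is a Young function equivalent near zero to t^{np₀/(n−mp₀)}(1 − log t)^{nα₀/(n−mp₀)} and near infinity to t^{np_∞/(n−mp_∞)}(1 + log t)^{nα_∞/(n−mp_∞)}. -/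

import Mathlib

/-!
The theorem is deduced from a modular estimate: if `∫ A (|∇ᵐu|) ≤ 1`, then `∫ B (|u - P| / C₀) ≤ 1`
for some polynomial `P` of degree at most `m - 1`, with `C₀` independent of `u`.

**The target function.** On `(0, ∞)`, `A` is comparable to the gluing `F` at `t = 1` of its two
Zygmund models (`comp_of_equiv`). With `G` the gluing of the two target models, a convex function
comparable to `G` is obtained by integrating `G (τ) / τ²` twice (`youngOf`, `youngOf_comp`,
`youngOf_young`), and this is `B`. The exponents are chosen such that
`B (C l A (l) ^ (-m / n)) ≤ K A (l)` for all `l > 0`, with `K` depending on `C` only (`zyg_conj`).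

**Smooth functions.** On a ball of radius `R`, a smooth `v` differs from an average of its Taylor
polynomials by at most a truncated Riesz potential of order `m` of `g ≥ |∇ᵐv|`
(`averaged_taylor`). If the averages of `g` at `x` are at most `l`, the potential is at most
`C l A (l) ^ (-m / n)` by Hedberg's argument: small balls are estimated through `l`, large balls
through `∫ A (g) ≤ 1`, the latter being effective because `A` grows more slowly than `t ^ (n / m)`
(`hedberg`). So `B (|v - Q|)` is at most a constant times `A` of the maximal function of `g`, whose
integral is controlled by `∫ A (g)` because `A` grows faster than the identity (`maximal`). The
resulting estimate is uniform in `R` (`smooth_modular`).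

**Weakly differentiable functions.** Mollification does not increase the modular of the gradient
(`moll_deriv_bound`, `moll_modular`). The polynomials attached to mollifications of `u` on growing
balls have a convergent subsequence, and Fatou's lemma gives the modular estimate on the whole space
(`weak_modular`).

**Uniqueness and norms.** By dilation, a nonzero polynomial has infinite modular over the whole
space (`poly_zero_of_finite`), so that only one polynomial is at finite distance from `u`
(`poly_unique`). The modular estimate applied to all multiples of `u` thus produces the same
polynomial each time, and homogeneity turns it into the inequality between Luxemburg norms
(`norm_of_modular`).
-/

open MeasureTheory ENNReal Set Filter

noncomputable section

/-- Euclidean space ℝⁿ. -/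
abbrev Euc (n : ℕ) := EuclideanSpace ℝ (Fin n)

/-- Nonincreasing rearrangement of an `ℝ≥0∞`-valued function. -/
def rearrE {α : Type*} [MeasurableSpace α] (μ : Measure α) (f : α → ℝ≥0∞) (t : ℝ) : ℝ≥0∞ :=
  sInf {l : ℝ≥0∞ | μ {x | l < f x} ≤ ENNReal.ofReal t}

/-- Unsigned nonincreasing rearrangement `f*` of a real-valued function. -/
def rearr {α : Type*} [MeasurableSpace α] (μ : Measure α) (f : α → ℝ) (t : ℝ) : ℝ≥0∞ :=
  rearrE μ (fun x => ENNReal.ofReal |f x|) t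

/-- `u` is `m`-times weakly differentiable on ℝⁿ, with weak derivatives
`D k a` of order `k ≤ m` in the directions `a : Fin k → Fin n`. -/
def HasWeakDerivs (n m : ℕ) (u : Euc n → ℝ) (D : ∀ k : ℕ, (Fin k → Fin n) → Euc n → ℝ) : Prop :=
  LocallyIntegrable u volume ∧ (∀ a : Fin 0 → Fin n, D 0 a = u) ∧
    (∀ k (a : Fin k → Fin n), k ≤ m → LocallyIntegrable (D k a) volume) ∧
    ∀ k : ℕ, k ≤ m → ∀ (a : Fin k → Fin n) (φ : Euc n → ℝ),
      ContDiff ℝ (⊤ : ℕ∞) φ → HasCompactSupport φ →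
        ∫ x, u x * iteratedFDeriv ℝ k φ x (fun j => EuclideanSpace.single (a j) 1)
          = (-1 : ℝ) ^ k * ∫ x, D k a x * φ x

/-- The ℓ¹-norm `|∇^m u|` of the vector of all `m`-th order weak derivatives. -/
def gradAbs (n m : ℕ) (D : ∀ k : ℕ, (Fin k → Fin n) → Euc n → ℝ) (x : Euc n) : ℝ :=
  ∑ a : Fin m → Fin n, |D m a x|

/-- Luxemburg norm of a real-valued function w.r.t. a Young function A. -/
def luxNorm {α : Type*} [MeasurableSpace α] (A : ℝ → ℝ≥0∞) (μ : Measure α) (f : α → ℝ) : ℝ≥0∞ :=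
  sInf {l : ℝ≥0∞ | ∃ lam : ℝ, 0 < lam ∧ l = ENNReal.ofReal lam ∧ ∫⁻ x, A (|f x| / lam) ∂μ ≤ 1}

/-- Predicate: A is a Young function (convex, left-continuous, vanishing at 0,
nondecreasing, neither identically 0 nor identically ∞ on (0,∞)). -/
def IsYoungFunction (A : ℝ → ℝ≥0∞) : Prop :=
  A 0 = 0 ∧ (∀ ⦃s t : ℝ⦄, 0 ≤ s → s ≤ t → A s ≤ A t) ∧
    (∀ ⦃s t a b : ℝ⦄, 0 ≤ s → 0 ≤ t → 0 ≤ a → 0 ≤ b → a + b = 1 →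
      A (a * s + b * t) ≤ ENNReal.ofReal a * A s + ENNReal.ofReal b * A t) ∧
    (∀ t : ℝ, 0 < t → A t = ⨆ s : Ioo (0 : ℝ) t, A (s : ℝ)) ∧
    (∃ t : ℝ, 0 < t ∧ A t ≠ 0) ∧ (∃ t : ℝ, 0 < t ∧ A t ≠ ⊤)

/-- The ratio s/A(s) (with the conventions 1/A = ∞ where A = 0). -/
def youngRatio (A : ℝ → ℝ≥0∞) (s : ℝ) : ℝ≥0∞ := ENNReal.ofReal s / A s

/-- H_m(t) = ( ∫₀^t (s/A(s))^{m/(n-m)} ds )^{(n-m)/n}. -/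
def Hm (A : ℝ → ℝ≥0∞) (n m : ℕ) (t : ℝ) : ℝ≥0∞ :=
  (∫⁻ s in Ioo (0 : ℝ) t, youngRatio A s ^ ((m : ℝ) / ((n : ℝ) - m))) ^ (((n : ℝ) - m) / n)

/-- H^∞ = lim_{t→∞} H_m(t) (= sup, H_m being nondecreasing). -/
def Hinfty (A : ℝ → ℝ≥0∞) (n m : ℕ) : ℝ≥0∞ := ⨆ t : ℝ, Hm A n m t

/-- The condition ∫₀ (s/A(s))^{m/(n-m)} ds < ∞. -/
def intCondZero (A : ℝ → ℝ≥0∞) (n m : ℕ) : Prop :=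
  ∃ t₀ : ℝ, 0 < t₀ ∧ (∫⁻ s in Ioo (0 : ℝ) t₀, youngRatio A s ^ ((m : ℝ) / ((n : ℝ) - m))) < ⊤

/-- The (generalized) inverse of H_m. -/
def HmInv (A : ℝ → ℝ≥0∞) (n m : ℕ) (y : ℝ≥0∞) : ℝ :=
  sInf {t : ℝ | 0 ≤ t ∧ y ≤ Hm A n m t}

/-- D_m(t) = ( t·A(H_m^{-1}(t)) / H_m^{-1}(t) )^{n/(n-m)} for 0 ≤ t < H^∞, and ∞ beyond. -/
def Dm (A : ℝ → ℝ≥0∞) (n m : ℕ) (t : ℝ) : ℝ≥0∞ :=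
  if ENNReal.ofReal t < Hinfty A n m then
    (ENNReal.ofReal t * A (HmInv A n m (ENNReal.ofReal t)) /
        ENNReal.ofReal (HmInv A n m (ENNReal.ofReal t))) ^ ((n : ℝ) / ((n : ℝ) - m))
  else ⊤

/-- A_m(t) = ∫₀^t D_m(s)/s ds. -/
def Am (A : ℝ → ℝ≥0∞) (n m : ℕ) (t : ℝ) : ℝ≥0∞ :=
  ∫⁻ s in Ioo (0 : ℝ) t, Dm A n m s / ENNReal.ofReal s

/-- A dominates B near zero. -/
def DominatesNearZero (A B : ℝ → ℝ≥0∞) : Prop :=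
  ∃ c : ℝ, 0 < c ∧ ∃ t₀ : ℝ, 0 < t₀ ∧ ∀ t ∈ Icc (0 : ℝ) t₀, B t ≤ A (c * t)

/-- A dominates B near infinity. -/
def DominatesNearInfty (A B : ℝ → ℝ≥0∞) : Prop :=
  ∃ c : ℝ, 0 < c ∧ ∃ t₀ : ℝ, 0 < t₀ ∧ ∀ t ∈ Ici t₀, B t ≤ A (c * t)

/-- A and B are equivalent near zero. -/
def EquivNearZero (A B : ℝ → ℝ≥0∞) : Prop :=
  DominatesNearZero A B ∧ DominatesNearZero B A

/-- A and B are equivalent near infinity. -/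
def EquivNearInfty (A B : ℝ → ℝ≥0∞) : Prop :=
  DominatesNearInfty A B ∧ DominatesNearInfty B A

/-! ### Zygmund-type model functions and their growth -/

/-- The Zygmund weight `t ^ p * (1 + |log t|) ^ α`, on all of `(0, ∞)`. -/
def zw (p α t : ℝ) : ℝ := t ^ p * (1 + |Real.log t|) ^ α

/-- The model function: `zw p α` on `(0, 1]` glued to `zw p₁ α₁` on `(1, ∞)`. Both take the
value `1` at `1`. -/
def zyg (p α p₁ α₁ t : ℝ) : ℝ := if t ≤ 1 then zw p α t else zw p₁ α₁ t

/-- `F (t) / t ^ q` is almost increasing on `(0, ∞)`. -/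
def LowGrowth (F : ℝ → ℝ) (q : ℝ) : Prop :=
  ∃ K : ℝ, 0 < K ∧ ∀ s t : ℝ, 0 < s → s ≤ t → F s ≤ K * (s / t) ^ q * F t

/-- `F (t) / t ^ r` is almost decreasing on `(0, ∞)`. -/
def UpGrowth (F : ℝ → ℝ) (r : ℝ) : Prop :=
  ∃ K : ℝ, 0 < K ∧ ∀ s t : ℝ, 0 < s → s ≤ t → F t ≤ K * (t / s) ^ r * F s

lemma zw_pos (p α : ℝ) {t : ℝ} (ht : 0 < t) : 0 < zw p α t := by
  unfold zw; positivity

lemma zyg_pos (p α p' α' : ℝ) {t : ℝ} (ht : 0 < t) : 0 < zyg p α p' α' t := by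
  unfold zyg; split_ifs <;> exact zw_pos _ _ ht

lemma zw_one (p α : ℝ) : zw p α 1 = 1 := by simp [zw]

/-- A power of the logarithmic factor changes at most exponentially in `log t`, with an
arbitrarily small rate. -/
lemma log_ratio_bound (β δ : ℝ) (hδ : 0 < δ) :
    ∃ K : ℝ, 0 < K ∧ ∀ x y : ℝ, (1 + |y|) ^ β ≤ K * Real.exp (δ * |y - x|) * (1 + |x|) ^ β := by
  set c : ℝ := 1 + |β| / δ with hc
  have hc1 : 1 ≤ c := by rw [hc]; have : 0 ≤ |β| / δ := by positivity
                         linarith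
  have hc0 : 0 < c := by linarith
  refine ⟨c ^ |β|, by positivity, fun x y => ?_⟩
  set d := |y - x| with hd
  have hd0 : 0 ≤ d := abs_nonneg _
  have h1 : (1 + d) ^ |β| ≤ c ^ |β| * Real.exp (δ * d) := by
    have : 1 + d ≤ c * Real.exp (d / c) := by
      have h := Real.add_one_le_exp (d / c)
      have h2 : c * (d / c + 1) ≤ c * Real.exp (d / c) := by gcongr
      have h3 : c * (d / c + 1) = d + c := by field_simp
      linarith
    calc (1 + d) ^ |β| ≤ (c * Real.exp (d / c)) ^ |β| :=
          Real.rpow_le_rpow (by positivity) this (abs_nonneg _)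
      _ = c ^ |β| * Real.exp (d / c * |β|) := by
          rw [Real.mul_rpow hc0.le (Real.exp_pos _).le, ← Real.exp_mul]
      _ ≤ _ := by
          refine mul_le_mul_of_nonneg_left (Real.exp_le_exp.2 ?_) (by positivity)
          rw [div_mul_eq_mul_div, div_le_iff₀ hc0, hc]
          have : δ * d * (1 + |β| / δ) = δ * d + d * |β| := by field_simp
          nlinarith [mul_nonneg hδ.le hd0]
  have hx : 0 < 1 + |x| := by positivity
  have hy : 0 < 1 + |y| := by positivity
  have hyx : 1 + |y| ≤ (1 + d) * (1 + |x|) := by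
    have : |y| ≤ |x| + d := by rw [hd]; have := abs_sub_abs_le_abs_sub y x; linarith
    nlinarith [abs_nonneg x]
  have hxy : 1 + |x| ≤ (1 + d) * (1 + |y|) := by
    have : |x| ≤ |y| + d := by
      rw [hd, abs_sub_comm]; have := abs_sub_abs_le_abs_sub x y; linarith
    nlinarith [abs_nonneg y]
  have h2 : (1 + |y|) ^ β ≤ (1 + d) ^ |β| * (1 + |x|) ^ β := by
    rcases le_total 0 β with hb | hb
    · rw [abs_of_nonneg hb, ← Real.mul_rpow (by positivity) hx.le]
      exact Real.rpow_le_rpow hy.le hyx hb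
    · rw [abs_of_nonpos hb]
      have := Real.rpow_le_rpow hx.le hxy (neg_nonneg.2 hb)
      rw [Real.mul_rpow (by positivity) hy.le, Real.rpow_neg hx.le, Real.rpow_neg hy.le,
        ← div_eq_mul_inv, le_div_iff₀ (by positivity)] at this
      have h3 : 0 < (1 + |x|) ^ β := by positivity
      calc (1 + |y|) ^ β = ((1 + |x|) ^ β)⁻¹ * (1 + |y|) ^ β * (1 + |x|) ^ β := by field_simp
        _ ≤ _ := by gcongr
  calc _ ≤ _ := h2
    _ ≤ _ := by gcongr

lemma div_rpow_eq_exp {s t : ℝ} (hs : 0 < s) (ht : 0 < t) (q : ℝ) :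
    (s / t) ^ q = Real.exp ((Real.log s - Real.log t) * q) := by
  rw [Real.rpow_def_of_pos (by positivity), Real.log_div hs.ne' ht.ne']

lemma zw_low (p α q : ℝ) (hq : q < p) : LowGrowth (zw p α) q := by
  obtain ⟨K, hK, h⟩ := log_ratio_bound α (p - q) (by linarith)
  refine ⟨K, hK, fun s t hs hst => ?_⟩
  have ht : 0 < t := hs.trans_le hst
  have := h (Real.log t) (Real.log s)
  have hl : Real.log s ≤ Real.log t := Real.log_le_log hs hst
  rw [abs_of_nonpos (sub_nonpos.2 hl)] at this
  have e : s ^ p = (s / t) ^ p * t ^ p := by rw [Real.div_rpow hs.le ht.le]; field_simp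
  unfold zw
  calc s ^ p * (1 + |Real.log s|) ^ α
      ≤ (s / t) ^ p * t ^ p * (K * Real.exp ((p - q) * -(Real.log s - Real.log t)) *
          (1 + |Real.log t|) ^ α) := by rw [← e]; gcongr
    _ = K * ((s / t) ^ p * Real.exp ((p - q) * -(Real.log s - Real.log t))) *
          (t ^ p * (1 + |Real.log t|) ^ α) := by ring
    _ = _ := by
      rw [div_rpow_eq_exp hs ht, div_rpow_eq_exp hs ht, ← Real.exp_add]
      ring_nf

lemma zw_up (p α r : ℝ) (hr : p < r) : UpGrowth (zw p α) r := by
  obtain ⟨K, hK, h⟩ := log_ratio_bound α (r - p) (by linarith)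
  refine ⟨K, hK, fun s t hs hst => ?_⟩
  have ht : 0 < t := hs.trans_le hst
  have := h (Real.log s) (Real.log t)
  have hl : Real.log s ≤ Real.log t := Real.log_le_log hs hst
  rw [abs_of_nonneg (sub_nonneg.2 hl)] at this
  have e : t ^ p = (t / s) ^ p * s ^ p := by rw [Real.div_rpow ht.le hs.le]; field_simp
  unfold zw
  calc t ^ p * (1 + |Real.log t|) ^ α
      ≤ (t / s) ^ p * s ^ p * (K * Real.exp ((r - p) * (Real.log t - Real.log s)) *
          (1 + |Real.log s|) ^ α) := by rw [← e]; gcongr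
    _ = K * ((t / s) ^ p * Real.exp ((r - p) * (Real.log t - Real.log s))) *
          (s ^ p * (1 + |Real.log s|) ^ α) := by ring
    _ = _ := by
      rw [div_rpow_eq_exp ht hs, div_rpow_eq_exp ht hs, ← Real.exp_add]
      ring_nf

lemma zyg_low (p α p' α' q : ℝ) (hq : q < p) (hq' : q < p') : LowGrowth (zyg p α p' α') q := by
  obtain ⟨K, hK, h⟩ := zw_low p α q hq
  obtain ⟨K', hK', h'⟩ := zw_low p' α' q hq'
  refine ⟨K + K' + K * K', by positivity, fun s t hs hst => ?_⟩
  have ht : 0 < t := hs.trans_le hst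
  have hp := zw_pos p α ht
  have hp' := zw_pos p' α' ht
  have hst0 : 0 < (s / t) ^ q := by positivity
  unfold zyg
  split_ifs with h1 h2 h2
  · refine (h s t hs hst).trans ?_
    gcongr; nlinarith [mul_pos hK hK']
  · have a := h s 1 hs h1
    have b := h' 1 t one_pos (not_le.1 h2).le
    rw [zw_one] at a b
    calc zw p α s ≤ K * (s / 1) ^ q * 1 := a
      _ ≤ K * (s / 1) ^ q * (K' * (1 / t) ^ q * zw p' α' t) := by gcongr
      _ = K * K' * (s / t) ^ q * zw p' α' t := by
        rw [Real.div_rpow hs.le ht.le, Real.div_rpow zero_le_one ht.le]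
        simp; ring
      _ ≤ _ := by gcongr; nlinarith
  · linarith
  · refine (h' s t hs hst).trans ?_
    gcongr; nlinarith [mul_pos hK hK']

lemma zyg_up (p α p' α' q : ℝ) (hq : p < q) (hq' : p' < q) : UpGrowth (zyg p α p' α') q := by
  obtain ⟨K, hK, h⟩ := zw_up p α q hq
  obtain ⟨K', hK', h'⟩ := zw_up p' α' q hq'
  refine ⟨K + K' + K * K', by positivity, fun s t hs hst => ?_⟩
  have ht : 0 < t := hs.trans_le hst
  have hp := zw_pos p α hs
  have hp' := zw_pos p' α' hs
  have hst0 : 0 < (t / s) ^ q := by positivity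
  unfold zyg
  split_ifs with h1 h2 h2
  · refine (h s t hs hst).trans ?_
    gcongr; nlinarith [mul_pos hK hK']
  · linarith
  · have a := h s 1 hs h2
    have b := h' 1 t one_pos (not_le.1 h1).le
    rw [zw_one] at a b
    calc zw p' α' t ≤ K' * (t / 1) ^ q * 1 := b
      _ ≤ K' * (t / 1) ^ q * (K * (1 / s) ^ q * zw p α s) := by gcongr
      _ = K * K' * (t / s) ^ q * zw p α s := by
        rw [Real.div_rpow ht.le hs.le, Real.div_rpow zero_le_one hs.le]
        simp; ring
      _ ≤ _ := by gcongr; nlinarith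
  · refine (h' s t hs hst).trans ?_
    gcongr; nlinarith [mul_pos hK hK']

/-- Almost monotonicity. -/
lemma LowGrowth.mono {F : ℝ → ℝ} {q : ℝ} (hq : 0 ≤ q) (hF : ∀ t, 0 < t → 0 < F t)
    (h : LowGrowth F q) : ∃ K : ℝ, 0 < K ∧ ∀ s t : ℝ, 0 < s → s ≤ t → F s ≤ K * F t := by
  obtain ⟨K, hK, h⟩ := h
  refine ⟨K, hK, fun s t hs hst => (h s t hs hst).trans ?_⟩
  have ht := hs.trans_le hst
  have := hF t ht
  have h1 : (s / t) ^ q ≤ 1 := Real.rpow_le_one (by positivity) ((div_le_one ht).2 hst) hq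
  have : K * (s / t) ^ q ≤ K * 1 := by gcongr
  gcongr; linarith

/-- Rescaling the argument costs only a multiplicative constant. -/
lemma growth_scale {F : ℝ → ℝ} {q r : ℝ} (hq : 0 ≤ q) (hF : ∀ t, 0 < t → 0 < F t)
    (h : LowGrowth F q) (h' : UpGrowth F r) (c : ℝ) (hc : 0 < c) :
    ∃ K : ℝ, 0 < K ∧ ∀ t : ℝ, 0 < t → F (c * t) ≤ K * F t := by
  obtain ⟨K, hK, h⟩ := h.mono hq hF
  obtain ⟨K', hK', h'⟩ := h'
  refine ⟨K + K' * c ^ r, by positivity, fun t ht => ?_⟩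
  have := hF t ht
  rcases le_total c 1 with h1 | h1
  · refine (h (c * t) t (by positivity) (by nlinarith)).trans ?_
    gcongr; have : 0 < K' * c ^ r := by positivity
    linarith
  · refine (h' t (c * t) ht (by nlinarith)).trans ?_
    rw [mul_div_assoc, div_self ht.ne', mul_one]
    gcongr; linarith

/-- A multiplicative constant can be absorbed by rescaling the argument. -/
lemma growth_absorb {F : ℝ → ℝ} {q : ℝ} (hq : 0 < q) (hF : ∀ t, 0 < t → 0 < F t)
    (h : LowGrowth F q) (C : ℝ) (hC : 0 < C) :
    ∃ c : ℝ, 0 < c ∧ ∀ t : ℝ, 0 < t → C * F t ≤ F (c * t) := by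
  obtain ⟨K, hK, h⟩ := h
  set c : ℝ := max 1 ((C * K) ^ (1 / q)) with hc
  have hc1 : 1 ≤ c := le_max_left _ _
  have hc0 : 0 < c := by linarith
  refine ⟨c, hc0, fun t ht => ?_⟩
  have h1 := h t (c * t) ht (by nlinarith)
  have h2 : C * K ≤ c ^ q := by
    calc C * K = ((C * K) ^ (1 / q)) ^ q := by
          rw [← Real.rpow_mul (by positivity)]; field_simp; simp
      _ ≤ _ := Real.rpow_le_rpow (by positivity) (le_max_right _ _) hq.le
  have e : (t / (c * t)) ^ q = (c ^ q)⁻¹ := by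
    rw [show t / (c * t) = c⁻¹ by field_simp, Real.inv_rpow hc0.le]
  rw [e] at h1
  have hF' := hF (c * t) (by positivity)
  calc C * F t ≤ C * (K * (c ^ q)⁻¹ * F (c * t)) := by gcongr
    _ = (C * K) * (c ^ q)⁻¹ * F (c * t) := by ring
    _ ≤ c ^ q * (c ^ q)⁻¹ * F (c * t) := by gcongr
    _ = F (c * t) := by rw [mul_inv_cancel₀ (by positivity), one_mul]

/-! ### Comparison of Young functions with model functions -/

/-- The extended-valued function `A` agrees with `F` on `(0, ∞)` up to a constant factor. -/
def Comp (A : ℝ → ℝ≥0∞) (F : ℝ → ℝ) : Prop :=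
  ∃ K : ℝ, 0 < K ∧ ∀ t : ℝ, 0 < t →
    ENNReal.ofReal (F t) ≤ ENNReal.ofReal K * A t ∧ A t ≤ ENNReal.ofReal (K * F t)

lemma rpow_le_of_comparable {X Y C : ℝ} (β : ℝ) (hX : 0 < X) (hY : 0 < Y) (hC : 0 < C)
    (h : Y ≤ C * X) (h' : X ≤ C * Y) : Y ^ β ≤ C ^ |β| * X ^ β := by
  rcases le_total 0 β with hb | hb
  · rw [abs_of_nonneg hb, ← Real.mul_rpow hC.le hX.le]
    exact Real.rpow_le_rpow hY.le h hb
  · rw [abs_of_nonpos hb]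
    have := Real.rpow_le_rpow hX.le h' (neg_nonneg.2 hb)
    rw [Real.mul_rpow hC.le hY.le, Real.rpow_neg hX.le, Real.rpow_neg hY.le,
      ← div_eq_mul_inv, le_div_iff₀ (by positivity)] at this
    have h3 : 0 < X ^ β := by positivity
    calc Y ^ β = (X ^ β)⁻¹ * Y ^ β * X ^ β := by field_simp
      _ ≤ _ := by gcongr

lemma log_zw (μ ν : ℝ) {s : ℝ} (hs : 0 < s) :
    Real.log (zw μ ν s) = μ * Real.log s + ν * Real.log (1 + |Real.log s|) := by
  unfold zw
  rw [Real.log_mul (by positivity) (by positivity), Real.log_rpow hs, Real.log_rpow (by positivity)]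

/-- The logarithmic factors of `s` and of `zw μ ν s` are comparable. -/
lemma log_zw_comparable (μ ν : ℝ) (hμ : 0 < μ) :
    ∃ C : ℝ, 0 < C ∧ ∀ s : ℝ, 0 < s →
      1 + |Real.log (zw μ ν s)| ≤ C * (1 + |Real.log s|) ∧
      1 + |Real.log s| ≤ C * (1 + |Real.log (zw μ ν s)|) := by
  set c : ℝ := 1 + 2 * |ν| / μ with hc
  have hc1 : 1 ≤ c := by
    have : 0 ≤ 2 * |ν| / μ := by positivity
    linarith
  have hc0 : 0 < c := by linarith
  have hlc : 0 ≤ Real.log c := Real.log_nonneg hc1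
  refine ⟨1 + μ + |ν| + 2 / μ * (1 + |ν| * Real.log c), by positivity, fun s hs => ?_⟩
  rw [log_zw μ ν hs]
  set l := Real.log s
  have hl : 0 ≤ |l| := abs_nonneg l
  have hL0 : 0 ≤ Real.log (1 + |l|) := Real.log_nonneg (by linarith)
  have hL1 : Real.log (1 + |l|) ≤ |l| := by
    have := Real.log_le_sub_one_of_pos (show 0 < 1 + |l| by positivity); linarith
  have hL2 : |ν| * Real.log (1 + |l|) ≤ |ν| * Real.log c + μ / 2 * |l| := by
    have h1 : Real.log (1 + |l|) ≤ Real.log c + |l| / c := by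
      have h := Real.add_one_le_exp (|l| / c)
      have h2 : 1 + |l| ≤ c * Real.exp (|l| / c) := by
        have h2 : c * (|l| / c + 1) ≤ c * Real.exp (|l| / c) := by gcongr
        have h3 : c * (|l| / c + 1) = |l| + c := by field_simp
        linarith
      have := Real.log_le_log (by positivity) h2
      rwa [Real.log_mul hc0.ne' (Real.exp_pos _).ne', Real.log_exp] at this
    have h2 : |ν| * (|l| / c) ≤ μ / 2 * |l| := by
      rw [← mul_div_assoc, div_le_iff₀ hc0, hc]
      have : μ / 2 * |l| * (1 + 2 * |ν| / μ) = μ / 2 * |l| + |ν| * |l| := by field_simp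
      have : 0 ≤ μ / 2 * |l| := by positivity
      linarith
    have := mul_le_mul_of_nonneg_left h1 (abs_nonneg ν)
    linarith
  have e1 : |μ * l| = μ * |l| := by rw [abs_mul, abs_of_pos hμ]
  have e2 : |ν * Real.log (1 + |l|)| = |ν| * Real.log (1 + |l|) := by
    rw [abs_mul, abs_of_nonneg hL0]
  set E := |μ * l + ν * Real.log (1 + |l|)|
  have hE0 : 0 ≤ E := abs_nonneg _
  have hE1 : E ≤ μ * |l| + |ν| * Real.log (1 + |l|) := by
    rw [← e1, ← e2]; exact abs_add_le _ _
  have hE2 : μ * |l| ≤ E + |ν| * Real.log (1 + |l|) := by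
    rw [← e1, ← e2]
    have := abs_sub (μ * l + ν * Real.log (1 + |l|)) (ν * Real.log (1 + |l|))
    simpa using this
  have hZ : 0 ≤ 2 / μ * (1 + |ν| * Real.log c) := by positivity
  constructor
  · have : |ν| * Real.log (1 + |l|) ≤ |ν| * |l| := by gcongr
    nlinarith [abs_nonneg ν, mul_nonneg hZ hl]
  · have h3 : |l| ≤ 2 / μ * (E + |ν| * Real.log c) := by
      rw [div_mul_eq_mul_div, le_div_iff₀ hμ]; linarith
    have h4 : 2 / μ * (E + |ν| * Real.log c) ≤ 2 / μ * (1 + |ν| * Real.log c) * (1 + E) := by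
      rw [mul_assoc]; gcongr
      nlinarith [mul_nonneg (mul_nonneg (abs_nonneg ν) hlc) hE0]
    nlinarith [abs_nonneg ν, mul_nonneg hμ.le hE0, mul_nonneg (abs_nonneg ν) hE0]

/-- The Sobolev conjugate `zw b β` of `zw p α` recovers `zw p α` when composed with
`s * (zw p α s) ^ (-θ) = zw (1 - θ p) (-θ α) s`. -/
lemma zw_conj (p α b β θ : ℝ) (hμ : 0 < 1 - θ * p) (hb : b * (1 - θ * p) = p)
    (hβ : β * (1 - θ * p) = α) :
    ∃ K : ℝ, 0 < K ∧ ∀ s : ℝ, 0 < s →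
      zw b β (zw (1 - θ * p) (-θ * α) s) ≤ K * zw p α s := by
  obtain ⟨C, hC, h⟩ := log_zw_comparable (1 - θ * p) (-θ * α) hμ
  refine ⟨C ^ |β|, by positivity, fun s hs => ?_⟩
  obtain ⟨h1, h2⟩ := h s hs
  have hk := zw_pos (1 - θ * p) (-θ * α) hs
  have h3 := rpow_le_of_comparable β (by positivity) (by positivity) hC h1 h2
  set l := Real.log s
  have hX : 0 < 1 + |l| := by positivity
  have e : zw (1 - θ * p) (-θ * α) s ^ b = s ^ p * (1 + |l|) ^ (-θ * α * b) := by
    unfold zw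
    rw [Real.mul_rpow (by positivity) (by positivity), ← Real.rpow_mul hs.le,
      ← Real.rpow_mul hX.le]
    congr 2; linarith
  have e2 : -θ * α * b + β = α := by
    have : α * b = β * p := by
      rw [← hβ, mul_assoc, mul_comm (1 - θ * p) b, hb]
    calc -θ * α * b + β = β - θ * (α * b) := by ring
      _ = β * (1 - θ * p) := by rw [this]; ring
      _ = α := hβ
  calc zw b β (zw (1 - θ * p) (-θ * α) s)
      = zw (1 - θ * p) (-θ * α) s ^ b * (1 + |Real.log (zw (1 - θ * p) (-θ * α) s)|) ^ β := rfl
    _ ≤ s ^ p * (1 + |l|) ^ (-θ * α * b) * (C ^ |β| * (1 + |l|) ^ β) := by rw [e]; gcongr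
    _ = C ^ |β| * (s ^ p * ((1 + |l|) ^ (-θ * α * b) * (1 + |l|) ^ β)) := by ring
    _ = _ := by rw [← Real.rpow_add hX, e2]; rfl

lemma mul_zw_rpow (p α θ : ℝ) {s : ℝ} (hs : 0 < s) :
    s * zw p α s ^ (-θ) = zw (1 - θ * p) (-θ * α) s := by
  unfold zw
  rw [Real.mul_rpow (by positivity) (by positivity), ← Real.rpow_mul hs.le,
    ← Real.rpow_mul (by positivity), ← mul_assoc]
  congr 1
  · rw [show 1 - θ * p = 1 + p * -θ by ring, Real.rpow_add hs, Real.rpow_one]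
  · congr 1; ring

/-- The Sobolev conjugation relation for the glued models, `G (C₁ s F (s) ^ (-θ)) ≤ K F (s)`. Here `s`
and `s F (s) ^ (-θ)` may lie on different sides of `1`; multiplication of the latter by a constant
moves it to the side of `s`, at the cost of another constant. -/
lemma zyg_conj (p α p' α' b β b' β' θ : ℝ)
    (hμ : 0 < 1 - θ * p) (hb : b * (1 - θ * p) = p) (hβ : β * (1 - θ * p) = α)
    (hμ' : 0 < 1 - θ * p') (hb' : b' * (1 - θ * p') = p') (hβ' : β' * (1 - θ * p') = α')
    (hb0 : 0 < b) (hb0' : 0 < b') (C₁ : ℝ) (hC₁ : 0 < C₁) :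
    ∃ K : ℝ, 0 < K ∧ ∀ s : ℝ, 0 < s →
      zyg b β b' β' (C₁ * (s * zyg p α p' α' s ^ (-θ))) ≤ K * zyg p α p' α' s := by
  have hpos : ∀ t, 0 < t → 0 < zyg b β b' β' t := fun t ht => zyg_pos _ _ _ _ ht
  have hlow : LowGrowth (zyg b β b' β') 0 := zyg_low _ _ _ _ _ hb0 hb0'
  have hup : UpGrowth (zyg b β b' β') (b + b' + 1) :=
    zyg_up _ _ _ _ _ (by linarith) (by linarith)
  obtain ⟨K₁, hK₁, h₁⟩ := zw_conj p α b β θ hμ hb hβ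
  obtain ⟨K₂, hK₂, h₂⟩ := zw_conj p' α' b' β' θ hμ' hb' hβ'
  obtain ⟨C, hC, hm⟩ := (zw_low (1 - θ * p) (-θ * α) 0 hμ).mono le_rfl
    fun t ht => zw_pos _ _ ht
  obtain ⟨C', hC', hm'⟩ := (zw_low (1 - θ * p') (-θ * α') 0 hμ').mono le_rfl
    fun t ht => zw_pos _ _ ht
  obtain ⟨K₃, hK₃, h₃⟩ := growth_scale le_rfl hpos hlow hup (C₁ * C) (by positivity)
  obtain ⟨K₄, hK₄, h₄⟩ := growth_scale le_rfl (fun t ht => zw_pos b β ht)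
    (zw_low b β 0 hb0) (zw_up b β (b + 1) (by linarith)) C⁻¹ (by positivity)
  obtain ⟨K₅, hK₅, h₅⟩ := growth_scale le_rfl hpos hlow hup (C₁ / (2 * C')) (by positivity)
  obtain ⟨K₆, hK₆, h₆⟩ := growth_scale le_rfl (fun t ht => zw_pos b' β' ht)
    (zw_low b' β' 0 hb0') (zw_up b' β' (b' + 1) (by linarith)) (2 * C') (by positivity)
  refine ⟨K₃ * (K₄ * K₁) + K₅ * (K₆ * K₂), by positivity, fun s hs => ?_⟩
  by_cases h1 : s ≤ 1
  · have e : zyg p α p' α' s = zw p α s := by simp [zyg, h1]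
    rw [e, mul_zw_rpow p α θ hs]
    set k := zw (1 - θ * p) (-θ * α) s with hk
    have hk0 : 0 < k := zw_pos _ _ hs
    have hk1 : k ≤ C := by
      have := hm s 1 hs h1
      rwa [zw_one, mul_one] at this
    have hz := zw_pos p α hs
    have e2 : C₁ * k = C₁ * C * (C⁻¹ * k) := by field_simp
    have e3 : zyg b β b' β' (C⁻¹ * k) = zw b β (C⁻¹ * k) := by
      have : C⁻¹ * k ≤ 1 := by rw [inv_mul_le_iff₀ hC]; linarith
      simp [zyg, this]
    calc zyg b β b' β' (C₁ * k) ≤ K₃ * zyg b β b' β' (C⁻¹ * k) := by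
          rw [e2]; exact h₃ _ (by positivity)
      _ ≤ K₃ * (K₄ * (K₁ * zw p α s)) := by
          rw [e3]; gcongr; refine (h₄ k hk0).trans ?_
          gcongr; exact h₁ s hs
      _ = K₃ * (K₄ * K₁) * zw p α s := by ring
      _ ≤ _ := by gcongr; linarith [show 0 < K₅ * (K₆ * K₂) by positivity]
  · have e : zyg p α p' α' s = zw p' α' s := by simp [zyg, h1]
    rw [e, mul_zw_rpow p' α' θ hs]
    set k := zw (1 - θ * p') (-θ * α') s with hk
    have hk0 : 0 < k := zw_pos _ _ hs
    have hk1 : 1 ≤ C' * k := by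
      have := hm' 1 s one_pos (not_le.1 h1).le
      rwa [zw_one] at this
    have hz := zw_pos p' α' hs
    have e2 : C₁ * k = C₁ / (2 * C') * (2 * C' * k) := by field_simp
    have e3 : zyg b β b' β' (2 * C' * k) = zw b' β' (2 * C' * k) := by
      have : ¬ (2 * C' * k ≤ 1) := by nlinarith
      simp only [zyg, this, if_false]
    calc zyg b β b' β' (C₁ * k) ≤ K₅ * zyg b β b' β' (2 * C' * k) := by
          rw [e2]; exact h₅ _ (by positivity)
      _ ≤ K₅ * (K₆ * (K₂ * zw p' α' s)) := by
          rw [e3]; gcongr; refine (h₆ k hk0).trans ?_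
          gcongr; exact h₂ s hs
      _ = K₅ * (K₆ * K₂) * zw p' α' s := by ring
      _ ≤ _ := by gcongr; linarith [show 0 < K₃ * (K₄ * K₁) by positivity]

lemma zyg_of_le (p α p' α' : ℝ) {t : ℝ} (ht : 0 < t) (ht1 : t ≤ 1) :
    zyg p α p' α' t = t ^ p * (1 - Real.log t) ^ α := by
  simp only [zyg, ht1, if_true, zw]
  rw [abs_of_nonpos (Real.log_nonpos ht.le ht1), ← sub_eq_add_neg]

lemma zyg_of_gt (p α p' α' : ℝ) {t : ℝ} (ht1 : 1 < t) :
    zyg p α p' α' t = t ^ p' * (1 + Real.log t) ^ α' := by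
  simp only [zyg, not_le.2 ht1, if_false, zw]
  rw [abs_of_nonneg (Real.log_nonneg ht1.le)]

/-- A constant factor between `B` and the glued model is absorbed by rescaling the argument, so
comparability implies equivalence near zero and near infinity. -/
lemma Comp.equiv {B : ℝ → ℝ≥0∞} {p α p' α' : ℝ} (hp : 0 < p) (hp' : 0 < p')
    (hB : B 0 = 0) (h : Comp B (zyg p α p' α')) :
    EquivNearZero B (fun t => ENNReal.ofReal (t ^ p * (1 - Real.log t) ^ α)) ∧
    EquivNearInfty B (fun t => ENNReal.ofReal (t ^ p' * (1 + Real.log t) ^ α')) := by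
  obtain ⟨K, hK, h⟩ := h
  set q := min p p' / 2
  have hm : 0 < min p p' := lt_min hp hp'
  have hq : q < min p p' := half_lt_self hm
  obtain ⟨c, hc, hcF⟩ := growth_absorb (q := q) (by positivity)
    (fun t ht => zyg_pos p α p' α' ht)
    (zyg_low p α p' α' q (hq.trans_le (min_le_left _ _))
      (hq.trans_le (min_le_right _ _))) K hK
  have hK0 : ENNReal.ofReal K ≠ 0 := by simpa using hK
  have low : ∀ t, 0 < t → ENNReal.ofReal (zyg p α p' α' t) ≤ B (c * t) := by
    intro t ht
    have h1 := (ENNReal.ofReal_le_ofReal (hcF t ht)).trans (h (c * t) (by positivity)).1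
    rw [ENNReal.ofReal_mul hK.le] at h1
    exact (ENNReal.mul_le_mul_iff_right hK0 ENNReal.ofReal_ne_top).1 h1
  have up : ∀ t, 0 < t → B t ≤ ENNReal.ofReal (zyg p α p' α' (c * t)) := fun t ht =>
    (h t ht).2.trans (ENNReal.ofReal_le_ofReal (hcF t ht))
  refine ⟨⟨⟨c, hc, 1, one_pos, ?_⟩, ⟨c, hc, c⁻¹, by positivity, ?_⟩⟩,
    ⟨⟨c, hc, 2, two_pos, ?_⟩, ⟨c, hc, 2 / c, by positivity, ?_⟩⟩⟩
  · rintro t ⟨ht0, ht1⟩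
    rcases ht0.eq_or_lt with rfl | ht0
    · simp [Real.zero_rpow hp.ne']
    · simpa [zyg_of_le p α p' α' ht0 ht1] using low t ht0
  · rintro t ⟨ht0, ht1⟩
    rcases ht0.eq_or_lt with rfl | ht0
    · simp [hB]
    · have : c * t ≤ 1 := by
        calc c * t ≤ c * c⁻¹ := by gcongr
          _ = 1 := mul_inv_cancel₀ hc.ne'
      simpa [zyg_of_le p α p' α' (mul_pos hc ht0) this] using up t ht0
  · intro t ht
    have ht : 2 ≤ t := ht
    simpa [zyg_of_gt p α p' α' (show 1 < t by linarith)] using low t (by linarith)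
  · intro t ht
    have ht : 2 / c ≤ t := ht
    have h2 : 2 ≤ c * t := by rw [div_le_iff₀ hc] at ht; linarith
    simpa [zyg_of_gt p α p' α' (show 1 < c * t by linarith)] using
      up t (lt_of_lt_of_le (by positivity) ht)

/-- A nondecreasing function equivalent to the two Zygmund models near `0` and near `∞` is
comparable to their gluing on the whole half-line: on the compact range in between, both are
bounded from above and from below. -/
lemma comp_of_equiv {A : ℝ → ℝ≥0∞} {p α p' α' : ℝ} (hp : 0 < p) (hp' : 0 < p')
    (hmono : ∀ ⦃s t : ℝ⦄, 0 ≤ s → s ≤ t → A s ≤ A t)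
    (h0 : EquivNearZero A (fun t => ENNReal.ofReal (t ^ p * (1 - Real.log t) ^ α)))
    (hi : EquivNearInfty A (fun t => ENNReal.ofReal (t ^ p' * (1 + Real.log t) ^ α'))) :
    Comp A (zyg p α p' α') := by
  obtain ⟨⟨c₁, hc₁, t₁, ht₁, h₁⟩, ⟨c₂, hc₂, t₂, ht₂, h₂⟩⟩ := h0
  obtain ⟨⟨c₃, hc₃, t₃, ht₃, h₃⟩, ⟨c₄, hc₄, t₄, ht₄, h₄⟩⟩ := hi
  set F := zyg p α p' α' with hF
  have hpos : ∀ t, 0 < t → 0 < F t := fun t ht => zyg_pos _ _ _ _ ht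
  have hlow : LowGrowth F 0 := zyg_low _ _ _ _ _ hp hp'
  have hup : UpGrowth F (p + p' + 1) := zyg_up _ _ _ _ _ (by linarith) (by linarith)
  obtain ⟨K₁, hK₁, g₁⟩ := growth_scale le_rfl hpos hlow hup c₁ hc₁
  obtain ⟨K₂, hK₂, g₂⟩ := growth_scale le_rfl hpos hlow hup c₂ hc₂
  obtain ⟨K₃, hK₃, g₃⟩ := growth_scale le_rfl hpos hlow hup c₃ hc₃
  obtain ⟨K₄, hK₄, g₄⟩ := growth_scale le_rfl hpos hlow hup c₄ hc₄
  obtain ⟨K₅, hK₅, g₅⟩ := hlow.mono le_rfl hpos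
  -- below `a` the model at zero applies, above `b` the model at infinity
  obtain ⟨a, ha0, ha⟩ : ∃ a > 0, ∀ t, 0 < t → t ≤ a →
      ENNReal.ofReal (F t) ≤ ENNReal.ofReal K₁ * A t ∧ A t ≤ ENNReal.ofReal (K₂ * F t) := by
    refine ⟨min (min (c₁ * t₁) c₁) (min t₂ c₂⁻¹), by positivity, fun t ht hta => ?_⟩
    obtain ⟨⟨e1, e2⟩, e3, e4⟩ : (t ≤ c₁ * t₁ ∧ t ≤ c₁) ∧ t ≤ t₂ ∧ t ≤ c₂⁻¹ := by
      simpa [le_min_iff] using hta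
    constructor
    · have hs : 0 < t / c₁ := by positivity
      have := h₁ (t / c₁) ⟨hs.le, by rw [div_le_iff₀ hc₁]; linarith⟩
      simp only at this
      rw [← zyg_of_le p α p' α' hs (by rw [div_le_iff₀ hc₁]; linarith),
        show c₁ * (t / c₁) = t by field_simp] at this
      have g := g₁ (t / c₁) hs
      rw [show c₁ * (t / c₁) = t by field_simp] at g
      calc ENNReal.ofReal (F t) ≤ ENNReal.ofReal (K₁ * F (t / c₁)) := ENNReal.ofReal_le_ofReal g
        _ = ENNReal.ofReal K₁ * ENNReal.ofReal (F (t / c₁)) := ENNReal.ofReal_mul hK₁.le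
        _ ≤ _ := by gcongr
    · have := h₂ t ⟨ht.le, e3⟩
      simp only at this
      rw [← zyg_of_le p α p' α' (mul_pos hc₂ ht)
        (by rw [← mul_inv_cancel₀ hc₂.ne']; gcongr)] at this
      exact this.trans (ENNReal.ofReal_le_ofReal (g₂ t ht))
  obtain ⟨b, hb0, hb⟩ : ∃ b > 0, ∀ t, b ≤ t →
      ENNReal.ofReal (F t) ≤ ENNReal.ofReal K₃ * A t ∧ A t ≤ ENNReal.ofReal (K₄ * F t) := by
    refine ⟨max (max (c₃ * t₃) (2 * c₃)) (max t₄ (2 / c₄)), by positivity, fun t htb => ?_⟩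
    obtain ⟨⟨e1, e2⟩, e3, e4⟩ : (c₃ * t₃ ≤ t ∧ 2 * c₃ ≤ t) ∧ t₄ ≤ t ∧ 2 / c₄ ≤ t := by
      simpa [max_le_iff] using htb
    have ht : 0 < t := by linarith
    constructor
    · have hs : 0 < t / c₃ := by positivity
      have := h₃ (t / c₃) (by rw [mem_Ici, le_div_iff₀ hc₃]; linarith)
      simp only at this
      rw [← zyg_of_gt p α p' α' (t := t / c₃) (by rw [lt_div_iff₀ hc₃]; linarith),
        show c₃ * (t / c₃) = t by field_simp] at this
      have g := g₃ (t / c₃) hs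
      rw [show c₃ * (t / c₃) = t by field_simp] at g
      calc ENNReal.ofReal (F t) ≤ ENNReal.ofReal (K₃ * F (t / c₃)) := ENNReal.ofReal_le_ofReal g
        _ = ENNReal.ofReal K₃ * ENNReal.ofReal (F (t / c₃)) := ENNReal.ofReal_mul hK₃.le
        _ ≤ _ := by gcongr
    · have := h₄ t e3
      simp only at this
      rw [← zyg_of_gt p α p' α' (t := c₄ * t)
        (by rw [div_le_iff₀ hc₄] at e4; linarith)] at this
      exact this.trans (ENNReal.ofReal_le_ofReal (g₄ t ht))
  have hFa := hpos a ha0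
  have hFb := hpos b hb0
  -- the middle range `[a, b]`
  have mid : ∀ t, a ≤ t → t ≤ b →
      ENNReal.ofReal (F t) ≤ ENNReal.ofReal (K₅ * F b / F a * K₁) * A t ∧
        A t ≤ ENNReal.ofReal (K₄ * F b / F a * K₅ * F t) := by
    intro t hat htb
    have ht := ha0.trans_le hat
    constructor
    · have h1 := (ha a ha0 le_rfl).1.trans (mul_le_mul_right (hmono ha0.le hat) _)
      calc ENNReal.ofReal (F t) ≤ ENNReal.ofReal (K₅ * F b / F a * F a) := by
            apply ENNReal.ofReal_le_ofReal
            rw [div_mul_cancel₀ _ hFa.ne']; exact g₅ t b ht htb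
        _ = ENNReal.ofReal (K₅ * F b / F a) * ENNReal.ofReal (F a) :=
            ENNReal.ofReal_mul (by positivity)
        _ ≤ ENNReal.ofReal (K₅ * F b / F a) * (ENNReal.ofReal K₁ * A t) := by gcongr
        _ = _ := by rw [ENNReal.ofReal_mul (by positivity), mul_assoc]
    · refine (hmono ht.le htb).trans ((hb b le_rfl).2.trans (ENNReal.ofReal_le_ofReal ?_))
      have := g₅ a t ha0 hat
      calc K₄ * F b = K₄ * F b / F a * F a := by field_simp
        _ ≤ K₄ * F b / F a * (K₅ * F t) := by gcongr
        _ = _ := by ring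
  refine ⟨K₁ + K₂ + (K₃ + K₄) + (K₅ * F b / F a * K₁ + K₄ * F b / F a * K₅), by positivity,
    fun t ht => ?_⟩
  have hFt := hpos t ht
  have z1 : 0 < K₅ * F b / F a * K₁ := by positivity
  have z2 : 0 < K₄ * F b / F a * K₅ := by positivity
  have fin : ∀ X Y, ENNReal.ofReal (F t) ≤ ENNReal.ofReal X * A t ∧ A t ≤ ENNReal.ofReal (Y * F t) →
      X ≤ K₁ + K₂ + (K₃ + K₄) + (K₅ * F b / F a * K₁ + K₄ * F b / F a * K₅) →
      Y ≤ K₁ + K₂ + (K₃ + K₄) + (K₅ * F b / F a * K₁ + K₄ * F b / F a * K₅) →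
      ENNReal.ofReal (F t) ≤ ENNReal.ofReal
        (K₁ + K₂ + (K₃ + K₄) + (K₅ * F b / F a * K₁ + K₄ * F b / F a * K₅)) * A t ∧
      A t ≤ ENNReal.ofReal
        ((K₁ + K₂ + (K₃ + K₄) + (K₅ * F b / F a * K₁ + K₄ * F b / F a * K₅)) * F t) := by
    intro X Y h hX hY
    exact ⟨h.1.trans (by gcongr), h.2.trans (by gcongr)⟩
  rcases le_total t a with h | h
  · exact fin _ _ (ha t ht h) (by linarith) (by linarith)
  rcases le_total t b with h' | h'
  · exact fin _ _ (mid t h h') (by linarith) (by linarith)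
  · exact fin _ _ (hb t h') (by linarith) (by linarith)

/-! ### Young functions with prescribed growth -/

/-- The convex function `t ↦ ∫₀^∞ (t - τ)₊ F (τ) / τ² dτ`, a Young function comparable to `F`
when `F` grows faster than the identity and at most like a power. -/
def youngOf (F : ℝ → ℝ) (t : ℝ) : ℝ≥0∞ :=
  ∫⁻ τ in Ioi (0 : ℝ), ENNReal.ofReal (t - τ) * ENNReal.ofReal (F τ / τ ^ 2)

lemma measurable_zyg (p α p' α' : ℝ) : Measurable (zyg p α p' α') := by
  unfold zyg zw
  refine Measurable.ite measurableSet_Iic ?_ ?_ <;>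
    exact (measurable_id.pow_const _).mul
      ((measurable_const.add (Real.measurable_log.abs)).pow_const _)

lemma youngOf_mono (F : ℝ → ℝ) {s t : ℝ} (h : s ≤ t) : youngOf F s ≤ youngOf F t := by
  unfold youngOf
  gcongr

/-- The integral defining `youngOf F` is dominated by that of `t F (τ) / τ²` over `(0, t]`, which
converges at `0` because `F` grows at least like a power with exponent `q > 1`. -/
lemma youngOf_upper {F : ℝ → ℝ} {q : ℝ} (hq : 1 < q) (hF : ∀ t, 0 < t → 0 < F t)
    (h : LowGrowth F q) :
    ∃ K : ℝ, 0 < K ∧ ∀ t, 0 < t → youngOf F t ≤ ENNReal.ofReal (K * F t) := by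
  obtain ⟨K, hK, h⟩ := h
  refine ⟨K / (q - 1), div_pos hK (by linarith), fun t ht => ?_⟩
  have hFt := hF t ht
  have key : ∀ τ ∈ Ioi (0 : ℝ), ENNReal.ofReal (t - τ) * ENNReal.ofReal (F τ / τ ^ 2) ≤
      (Ioc 0 t).indicator
        (fun τ => ENNReal.ofReal (K * F t * t ^ (1 - q)) * ENNReal.ofReal (τ ^ (q - 2))) τ := by
    intro τ hτ
    have hτ : 0 < τ := hτ
    by_cases hτt : τ ≤ t
    · rw [indicator_of_mem (show τ ∈ Ioc 0 t from ⟨hτ, hτt⟩),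
        ← ENNReal.ofReal_mul (by linarith), ← ENNReal.ofReal_mul (by positivity)]
      apply ENNReal.ofReal_le_ofReal
      have hFτ := hF τ hτ
      calc (t - τ) * (F τ / τ ^ 2) ≤ t * ((K * (τ / t) ^ q * F t) / τ ^ 2) := by
            gcongr
            · linarith
            · exact h τ t hτ hτt
        _ = _ := by
            rw [Real.div_rpow hτ.le ht.le, Real.rpow_sub ht, Real.rpow_sub hτ]
            simp only [Real.rpow_one, Real.rpow_two]
            ring
    · rw [ENNReal.ofReal_of_nonpos (by linarith [not_le.1 hτt])]; simp
  have h_intg : ∫⁻ τ in Ioc 0 t, ENNReal.ofReal (τ ^ (q - 2)) = ENNReal.ofReal (t ^ (q - 1) / (q - 1)) := by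
    have hi : IntervalIntegrable (fun τ : ℝ => τ ^ (q - 2)) volume 0 t :=
      intervalIntegral.intervalIntegrable_rpow' (by linarith)
    rw [← ofReal_integral_eq_lintegral_ofReal
      ((intervalIntegrable_iff_integrableOn_Ioc_of_le ht.le).1 hi), ← intervalIntegral.integral_of_le ht.le,
      integral_rpow (Or.inl (by linarith))]
    · rw [Real.zero_rpow (by linarith)]; congr 1; ring_nf
    · filter_upwards [ae_restrict_mem measurableSet_Ioc] with τ hτ
      exact Real.rpow_nonneg hτ.1.le _
  calc youngOf F t ≤ ∫⁻ τ in Ioi (0 : ℝ), (Ioc 0 t).indicator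
        (fun τ => ENNReal.ofReal (K * F t * t ^ (1 - q)) * ENNReal.ofReal (τ ^ (q - 2))) τ :=
        setLIntegral_mono' measurableSet_Ioi key
    _ ≤ ∫⁻ τ, (Ioc 0 t).indicator
        (fun τ => ENNReal.ofReal (K * F t * t ^ (1 - q)) * ENNReal.ofReal (τ ^ (q - 2))) τ :=
        setLIntegral_le_lintegral _ _
    _ = ENNReal.ofReal (K * F t * t ^ (1 - q)) * ENNReal.ofReal (t ^ (q - 1) / (q - 1)) := by
        rw [lintegral_indicator measurableSet_Ioc, lintegral_const_mul' _ _ ENNReal.ofReal_ne_top,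
          h_intg]
    _ = ENNReal.ofReal (K / (q - 1) * F t) := by
        rw [← ENNReal.ofReal_mul (by positivity)]
        congr 1
        have : t ^ (1 - q) * t ^ (q - 1) = 1 := by
          rw [← Real.rpow_add ht]; simp
        calc _ = K / (q - 1) * F t * (t ^ (1 - q) * t ^ (q - 1)) := by ring
          _ = _ := by rw [this, mul_one]

/-- The contribution of `τ` between `t / 4` and `t / 2` alone is already comparable to `F (t)`. -/
lemma youngOf_lower {F : ℝ → ℝ} {r : ℝ} (hr : 0 ≤ r) (hF : ∀ t, 0 < t → 0 < F t)
    (h : UpGrowth F r) :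
    ∃ K : ℝ, 0 < K ∧ ∀ t, 0 < t → ENNReal.ofReal (F t) ≤ ENNReal.ofReal K * youngOf F t := by
  obtain ⟨K, hK, h⟩ := h
  refine ⟨2 * K * 4 ^ r, by positivity, fun t ht => ?_⟩
  have hFt := hF t ht
  have key : ∀ τ ∈ Ioc (t / 4) (t / 2), ENNReal.ofReal (2 * F t / (K * 4 ^ r * t)) ≤
      ENNReal.ofReal (t - τ) * ENNReal.ofReal (F τ / τ ^ 2) := by
    rintro τ ⟨h1, h2⟩
    have hτ : 0 < τ := by linarith
    have hFτ := hF τ hτ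
    rw [← ENNReal.ofReal_mul (by linarith)]
    apply ENNReal.ofReal_le_ofReal
    have h3 := h τ t hτ (by linarith)
    have h4 : (t / τ) ^ r ≤ 4 ^ r := by
      apply Real.rpow_le_rpow (by positivity) _ hr
      rw [div_le_iff₀ hτ]; linarith
    have h5 : F t / (K * 4 ^ r) ≤ F τ := by
      rw [div_le_iff₀ (by positivity)]
      calc F t ≤ K * (t / τ) ^ r * F τ := h3
        _ ≤ K * 4 ^ r * F τ := by gcongr
        _ = _ := by ring
    calc 2 * F t / (K * 4 ^ r * t) = (t / 2) * ((F t / (K * 4 ^ r)) / (t / 2) ^ 2) := by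
          field_simp
      _ ≤ (t - τ) * (F τ / τ ^ 2) := by gcongr <;> linarith
  have : ENNReal.ofReal (2 * F t / (K * 4 ^ r * t)) * ENNReal.ofReal (t / 4) ≤ youngOf F t := by
    calc _ = ∫⁻ τ in Ioc (t / 4) (t / 2), ENNReal.ofReal (2 * F t / (K * 4 ^ r * t)) := by
          rw [setLIntegral_const, Real.volume_Ioc]; congr 2; ring
      _ ≤ ∫⁻ τ in Ioc (t / 4) (t / 2), ENNReal.ofReal (t - τ) * ENNReal.ofReal (F τ / τ ^ 2) :=
          setLIntegral_mono' measurableSet_Ioc key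
      _ ≤ _ := lintegral_mono_set fun τ hτ => lt_trans (by positivity) hτ.1
  calc ENNReal.ofReal (F t) = ENNReal.ofReal (2 * K * 4 ^ r) *
        (ENNReal.ofReal (2 * F t / (K * 4 ^ r * t)) * ENNReal.ofReal (t / 4)) := by
        rw [← ENNReal.ofReal_mul (by positivity), ← ENNReal.ofReal_mul (by positivity)]
        congr 1; field_simp; norm_num
    _ ≤ _ := by gcongr

lemma youngOf_comp {F : ℝ → ℝ} {q r : ℝ} (hq : 1 < q) (hr : 0 ≤ r) (hF : ∀ t, 0 < t → 0 < F t)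
    (h : LowGrowth F q) (h' : UpGrowth F r) : Comp (youngOf F) F := by
  obtain ⟨K, hK, h1⟩ := youngOf_upper hq hF h
  obtain ⟨K', hK', h2⟩ := youngOf_lower hr hF h'
  refine ⟨K + K', by positivity, fun t ht => ⟨(h2 t ht).trans ?_, (h1 t ht).trans ?_⟩⟩
  · gcongr; linarith
  · have := hF t ht
    gcongr; linarith

lemma youngOf_young {F : ℝ → ℝ} (hm : Measurable F) (hF : ∀ t, 0 < t → 0 < F t)
    (h : Comp (youngOf F) F) : IsYoungFunction (youngOf F) := by
  obtain ⟨K, hK, h⟩ := h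
  have meas : ∀ t : ℝ, Measurable
      fun τ => ENNReal.ofReal (t - τ) * ENNReal.ofReal (F τ / τ ^ 2) := fun t =>
    (measurable_const.sub measurable_id).ennreal_ofReal.mul
      (hm.div (measurable_id.pow_const 2)).ennreal_ofReal
  refine ⟨?_, fun s t _ hst => youngOf_mono F hst, ?_, ?_, ⟨1, one_pos, ?_⟩, ⟨1, one_pos, ?_⟩⟩
  · unfold youngOf
    rw [setLIntegral_congr_fun (g := fun _ => 0) measurableSet_Ioi]
    · simp
    · intro τ hτ
      have hτ : 0 < τ := hτ
      simp [ENNReal.ofReal_of_nonpos, hτ.le]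
  · intro s t a b hs ht ha hb hab
    unfold youngOf
    rw [← lintegral_const_mul _ (meas s), ← lintegral_const_mul _ (meas t),
      ← lintegral_add_left ((meas s).const_mul _)]
    refine lintegral_mono fun τ => ?_
    simp only
    rw [← mul_assoc, ← mul_assoc, ← add_mul]
    gcongr
    rw [← ENNReal.ofReal_mul ha, ← ENNReal.ofReal_mul hb]
    have : a * s + b * t - τ = a * (s - τ) + b * (t - τ) := by
      calc _ = a * s + b * t - (a + b) * τ := by rw [hab]; ring
        _ = _ := by ring
    rw [this]
    exact ENNReal.ofReal_add_le
  · intro t ht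
    apply le_antisymm
    · set σ : ℕ → ℝ := fun k => t - t / (k + 2) with hσ
      have hσm : Monotone σ := fun i j hij => by
        simp only [hσ]; gcongr
      have hσt : Tendsto σ atTop (nhds t) := by
        have h1 : Tendsto (fun k : ℕ => t / ((k : ℝ) + 2)) atTop (nhds 0) :=
          (tendsto_natCast_atTop_atTop.atTop_add tendsto_const_nhds).const_div_atTop t
        simpa using tendsto_const_nhds.sub h1
      have hσI : ∀ k, σ k ∈ Ioo 0 t := fun k => by
        have h2 : (0 : ℝ) < k + 2 := by positivity
        constructor
        · have : t / (k + 2) < t := by rw [div_lt_iff₀ h2]; nlinarith [(Nat.cast_nonneg k : (0:ℝ) ≤ k)]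
          simp only [hσ]; linarith
        · have : 0 < t / (k + 2) := by positivity
          simp only [hσ]; linarith
      have : youngOf F t = ⨆ k, youngOf F (σ k) := by
        unfold youngOf
        rw [← lintegral_iSup (fun k => meas (σ k))]
        · congr 1; ext τ
          rw [← ENNReal.iSup_mul]
          congr 1
          refine tendsto_nhds_unique ?_ (tendsto_atTop_iSup fun i j hij =>
            ENNReal.ofReal_le_ofReal (sub_le_sub_right (hσm hij) τ))
          exact ENNReal.tendsto_ofReal (hσt.sub tendsto_const_nhds)
        · intro i j hij τ
          simp only
          gcongr; exact hσm hij
      rw [this]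
      exact iSup_le fun k => le_iSup (fun s : Ioo (0 : ℝ) t => youngOf F s) ⟨σ k, hσI k⟩
    · exact iSup_le fun s => youngOf_mono F s.2.2.le
  · intro h0
    have := (h 1 one_pos).1
    rw [h0, mul_zero, nonpos_iff_eq_zero, ENNReal.ofReal_eq_zero] at this
    linarith [hF 1 one_pos]
  · exact ne_top_of_le_ne_top ENNReal.ofReal_ne_top (h 1 one_pos).2

/-! ### Finite Young functions, Jensen's inequality, and the weak-type maximal estimate -/

/-- Real-valued version of a finite Young function, extended by `0` to the negative half-line. -/
def realOf (A : ℝ → ℝ≥0∞) (t : ℝ) : ℝ := (A (max t 0)).toReal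

/-- The data on a Young function used in the Sobolev estimates: it is finite and positive
on `(0, ∞)` and, up to constants, grows at least like `t ^ q` and at most like `t ^ ρ`. -/
structure Good (A : ℝ → ℝ≥0∞) (q ρ : ℝ) : Prop where
  young : IsYoungFunction A
  fin : ∀ t, A t ≠ ⊤ ∨ t < 0
  pos : ∀ t, 0 < t → 0 < realOf A t
  low : LowGrowth (realOf A) q
  up : UpGrowth (realOf A) ρ

lemma realOf_eq {A : ℝ → ℝ≥0∞} {t : ℝ} (h : ∀ t, A t ≠ ⊤ ∨ t < 0) (ht : 0 ≤ t) :
    ENNReal.ofReal (realOf A t) = A t := by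
  unfold realOf
  rw [max_eq_left ht, ENNReal.ofReal_toReal]
  exact (h t).resolve_right (not_lt.2 ht)

lemma realOf_nonneg (A : ℝ → ℝ≥0∞) (t : ℝ) : 0 ≤ realOf A t := ENNReal.toReal_nonneg

lemma realOf_mono {A : ℝ → ℝ≥0∞} (hA : IsYoungFunction A) (h : ∀ t, A t ≠ ⊤ ∨ t < 0) :
    Monotone (realOf A) := fun _ _ hst =>
  ENNReal.toReal_mono ((h _).resolve_right (not_lt.2 (le_max_right _ _)))
    (hA.2.1 (le_max_right _ _) (max_le_max_right _ hst))

lemma realOf_convex {A : ℝ → ℝ≥0∞} (hA : IsYoungFunction A) (h : ∀ t, A t ≠ ⊤ ∨ t < 0) :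
    ConvexOn ℝ univ (realOf A) := by
  refine ⟨convex_univ, fun s _ t _ a b ha hb hab => ?_⟩
  have hf : ∀ t, A (max t 0) ≠ ⊤ := fun t => (h _).resolve_right (not_lt.2 (le_max_right _ _))
  have h1 : max (a * s + b * t) 0 ≤ a * max s 0 + b * max t 0 := by
    refine max_le ?_ ?_
    · gcongr <;> exact le_max_left _ _
    · have := le_max_right s 0; have := le_max_right t 0; positivity
  have h2 := (hA.2.1 (le_max_right _ _) h1).trans
    (hA.2.2.1 (le_max_right s 0) (le_max_right t 0) ha hb hab)
  have h3 := ENNReal.toReal_mono (by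
    exact ENNReal.add_ne_top.2 ⟨ENNReal.mul_ne_top ENNReal.ofReal_ne_top (hf s),
      ENNReal.mul_ne_top ENNReal.ofReal_ne_top (hf t)⟩) h2
  rw [ENNReal.toReal_add (ENNReal.mul_ne_top ENNReal.ofReal_ne_top (hf s))
    (ENNReal.mul_ne_top ENNReal.ofReal_ne_top (hf t)), ENNReal.toReal_mul, ENNReal.toReal_mul,
    ENNReal.toReal_ofReal ha, ENNReal.toReal_ofReal hb] at h3
  exact h3

lemma realOf_continuous {A : ℝ → ℝ≥0∞} (hA : IsYoungFunction A) (h : ∀ t, A t ≠ ⊤ ∨ t < 0) :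
    Continuous (realOf A) :=
  continuousOn_univ.1 ((realOf_convex hA h).continuousOn isOpen_univ)

/-- Jensen's inequality. -/
lemma young_jensen {α : Type*} [MeasurableSpace α] {μ : Measure α} [IsProbabilityMeasure μ]
    {A : ℝ → ℝ≥0∞} (hA : IsYoungFunction A) (h : ∀ t, A t ≠ ⊤ ∨ t < 0)
    {g : α → ℝ} (hg : Integrable g μ) (hg0 : ∀ x, 0 ≤ g x) :
    A (∫ x, g x ∂μ) ≤ ∫⁻ x, A (g x) ∂μ := by
  have e : ∀ x, A (g x) = ENNReal.ofReal (realOf A (g x)) := fun x => (realOf_eq h (hg0 x)).symm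
  simp only [e]
  rw [← realOf_eq h (integral_nonneg hg0)]
  by_cases ht : ∫⁻ x, ENNReal.ofReal (realOf A (g x)) ∂μ = ⊤
  · rw [ht]; exact le_top
  have hm : AEStronglyMeasurable (fun x => realOf A (g x)) μ :=
    (realOf_continuous hA h).comp_aestronglyMeasurable hg.1
  have hi : Integrable (fun x => realOf A (g x)) μ :=
    (lintegral_ofReal_ne_top_iff_integrable hm
      (Eventually.of_forall fun x => realOf_nonneg A _)).1 ht
  rw [← ofReal_integral_eq_lintegral_ofReal hi (Eventually.of_forall fun x => realOf_nonneg A _)]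
  exact ENNReal.ofReal_le_ofReal
    ((realOf_convex hA h).map_integral_le (realOf_continuous hA h).continuousOn isClosed_univ
      (Eventually.of_forall fun _ => mem_univ _) hg hi)

lemma volume_closedBall_mul {n : ℕ} (x y : Euc n) {c r : ℝ} (hc : 0 ≤ c) (hr : 0 ≤ r) :
    volume (Metric.closedBall x (c * r)) =
      ENNReal.ofReal (c ^ n) * volume (Metric.closedBall y r) := by
  rw [Measure.addHaar_closedBall _ _ (by positivity), Measure.addHaar_closedBall _ _ hr,
    mul_pow, ENNReal.ofReal_mul (by positivity), mul_assoc]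
  simp

/-- Weak type `(1,1)` of the Hardy–Littlewood maximal operator, by the Vitali covering lemma. -/
lemma hl_weak {n : ℕ} (h : Euc n → ℝ≥0∞) (l : ℝ≥0∞) :
    l * volume {x : Euc n | ∃ r > 0, l * volume (Metric.closedBall x r) <
        ∫⁻ y in Metric.closedBall x r, h y} ≤ ENNReal.ofReal (5 ^ n) * ∫⁻ y, h y := by
  set E : ℕ → Set (Euc n) := fun N => {x | ∃ r : ℝ, r > 0 ∧ r ≤ N ∧ l * volume (Metric.closedBall x r) <
        ∫⁻ y in Metric.closedBall x r, h y} with hE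
  have hU : {x : Euc n | ∃ r > 0, l * volume (Metric.closedBall x r) <
        ∫⁻ y in Metric.closedBall x r, h y} = ⋃ N, E N := by
    ext x
    simp only [hE, Set.mem_ofPred_eq, mem_iUnion]
    constructor
    · rintro ⟨r, hr, hx⟩
      obtain ⟨N, hN⟩ := exists_nat_ge r
      exact ⟨N, r, hr, hN, hx⟩
    · rintro ⟨N, r, hr, _, hx⟩
      exact ⟨r, hr, hx⟩
  have hmono : Monotone E := fun i j hij x ⟨r, hr, hri, hx⟩ =>
    ⟨r, hr, hri.trans (by exact_mod_cast hij), hx⟩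
  rw [hU, hmono.measure_iUnion, ENNReal.mul_iSup]
  refine iSup_le fun N => ?_
  set t : Set (Euc n × ℝ) := {p | 0 < p.2 ∧ p.2 ≤ N ∧ l * volume (Metric.closedBall p.1 p.2) <
        ∫⁻ y in Metric.closedBall p.1 p.2, h y} with ht
  obtain ⟨u, hut, hud, hu⟩ := Vitali.exists_disjoint_subfamily_covering_enlargement_closedBall
    t Prod.fst Prod.snd N (fun a ha => ha.2.1) 5 (by norm_num)
  have huc : u.Countable := hud.countable_of_nonempty_interior fun a ha => by
    have := (hut ha).1
    exact ⟨a.1, Metric.ball_subset_interior_closedBall (Metric.mem_ball_self this)⟩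
  have hcov : E N ⊆ ⋃ b ∈ u, Metric.closedBall b.1 (5 * b.2) := by
    rintro x ⟨r, hr, hrN, hx⟩
    obtain ⟨b, hb, hbs⟩ := hu (x, r) ⟨hr, hrN, hx⟩
    exact mem_biUnion hb (hbs (Metric.mem_closedBall_self hr.le))
  have := huc.to_subtype
  calc l * volume (E N) ≤ l * ∑' b : u, volume (Metric.closedBall b.1.1 (5 * b.1.2)) := by
        gcongr
        exact (measure_mono hcov).trans (measure_biUnion_le _ huc _)
    _ = ∑' b : u, ENNReal.ofReal (5 ^ n) * (l * volume (Metric.closedBall b.1.1 b.1.2)) := by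
        rw [← ENNReal.tsum_mul_left]
        congr 1; ext b
        rw [volume_closedBall_mul b.1.1 b.1.1 (by norm_num) (hut b.2).1.le]
        ring
    _ ≤ ∑' b : u, ENNReal.ofReal (5 ^ n) * ∫⁻ y in Metric.closedBall b.1.1 b.1.2, h y := by
        gcongr with b
        exact (hut b.2).2.2.le
    _ = ENNReal.ofReal (5 ^ n) * ∫⁻ y in ⋃ b ∈ u, Metric.closedBall b.1 b.2, h y := by
        rw [ENNReal.tsum_mul_left, lintegral_biUnion huc (fun b _ => measurableSet_closedBall) hud]
    _ ≤ _ := by gcongr; exact Measure.restrict_le_self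

/-! ### The strong maximal inequality in modular form -/

/-- Summing the dyadic levels below `γ` costs no more than the value of `A` at `γ`, because `A`
grows at least like `t ^ q` with `q > 1`. -/
lemma dyadic_sum {A : ℝ → ℝ≥0∞} {q ρ : ℝ} (hq : 1 < q) (hA : Good A q ρ) :
    ∃ K : ℝ, 0 < K ∧ ∀ γ : ℝ, 0 ≤ γ →
      ∑' k : ℤ, ENNReal.ofReal (if (2:ℝ) ^ k < γ then realOf A (2 ^ (k + 2)) * 2 ^ (-k) * γ else 0)
        ≤ ENNReal.ofReal K * A γ := by
  obtain ⟨K1, hK1, h1⟩ := hA.low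
  obtain ⟨K2, hK2, h2⟩ := growth_scale (by linarith) hA.pos hA.low hA.up 4 (by norm_num)
  set θ : ℝ := 2 ^ (-(q - 1)) with hθ
  have hθ0 : 0 < θ := by positivity
  have hθ1 : θ < 1 := Real.rpow_lt_one_of_one_lt_of_neg (by norm_num) (by linarith)
  refine ⟨K2 * K1 * (1 - θ)⁻¹, by have : 0 < 1 - θ := by linarith
                                  positivity, fun γ hγ => ?_⟩
  rcases hγ.eq_or_lt with rfl | hγ
  · have : ∀ k : ℤ, ¬ ((2:ℝ) ^ k < 0) := fun k => not_lt.2 (by positivity)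
    simp [this]
  obtain ⟨k0, hk0, hk0'⟩ := exists_mem_Ioc_zpow hγ (by norm_num : (1:ℝ) < 2)
  set f : ℤ → ℝ≥0∞ := fun k =>
    ENNReal.ofReal (if (2:ℝ) ^ k < γ then realOf A (2 ^ (k + 2)) * 2 ^ (-k) * γ else 0) with hf
  have hinj : Function.Injective (fun j : ℕ => k0 - (j : ℤ)) := fun i j h => by
    simp only at h; omega
  have hsupp : Function.support f ⊆ range (fun j : ℕ => k0 - (j : ℤ)) := by
    intro k hk
    have hlt : (2:ℝ) ^ k < γ := by
      by_contra h
      exact hk (by simp [hf, h])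
    have hle : k ≤ k0 := by
      have := hlt.trans_le hk0'
      have := (zpow_lt_zpow_iff_right₀ (by norm_num : (1:ℝ) < 2)).1 this
      omega
    exact ⟨(k0 - k).toNat, by simp only; omega⟩
  rw [← hinj.tsum_eq hsupp]
  have hterm : ∀ j : ℕ, f (k0 - (j : ℤ)) ≤
      ENNReal.ofReal (K2 * K1) * A γ * (ENNReal.ofReal θ) ^ j := by
    intro j
    set s : ℝ := 2 ^ (k0 - (j : ℤ)) with hs
    have hs0 : 0 < s := by positivity
    have hsj : s / γ ≤ 2 ^ (-(j : ℤ)) := by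
      rw [hs, sub_eq_add_neg, zpow_add₀ (by norm_num), div_le_iff₀ hγ, mul_comm]
      gcongr
    have hs1 : s < γ := by
      refine lt_of_le_of_lt ?_ hk0
      rw [hs]; gcongr
      · norm_num
      · omega
    rw [← realOf_eq hA.fin hγ.le, ← ENNReal.ofReal_pow hθ0.le, ← ENNReal.ofReal_mul (by positivity),
      ← ENNReal.ofReal_mul (by have := realOf_nonneg A γ; positivity)]
    refine ENNReal.ofReal_le_ofReal ?_
    rw [if_pos hs1, zpow_add₀ (by norm_num : (2:ℝ) ≠ 0), zpow_neg, ← hs]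
    have e1 : realOf A (s * 2 ^ (2:ℤ)) ≤ K2 * (K1 * (s / γ) ^ q * realOf A γ) := by
      have : s * 2 ^ (2:ℤ) = 4 * s := by norm_num; ring
      rw [this]
      exact (h2 s hs0).trans (by gcongr; exact h1 s γ hs0 hs1.le)
    have e2 : (s / γ) ^ q = (s / γ) * (s / γ) ^ (q - 1) := by
      rw [Real.rpow_sub_one (by positivity)]; field_simp
    have e3 : (s / γ) ^ (q - 1) ≤ θ ^ j := by
      refine (Real.rpow_le_rpow (by positivity) hsj (by linarith)).trans_eq ?_
      rw [hθ, ← Real.rpow_intCast, ← Real.rpow_natCast, ← Real.rpow_mul (by norm_num),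
        ← Real.rpow_mul (by norm_num)]
      congr 1; push_cast; ring
    calc realOf A (s * 2 ^ (2:ℤ)) * s⁻¹ * γ
        ≤ K2 * (K1 * ((s / γ) * (s / γ) ^ (q - 1)) * realOf A γ) * s⁻¹ * γ := by
          rw [← e2]; gcongr
      _ = K2 * K1 * realOf A γ * (s / γ) ^ (q - 1) := by field_simp
      _ ≤ _ := by have := realOf_nonneg A γ; gcongr
  calc ∑' j : ℕ, f (k0 - (j : ℤ)) ≤
      ∑' j : ℕ, ENNReal.ofReal (K2 * K1) * A γ * (ENNReal.ofReal θ) ^ j := ENNReal.tsum_le_tsum hterm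
    _ = ENNReal.ofReal (K2 * K1) * A γ * (1 - ENNReal.ofReal θ)⁻¹ := by
        rw [ENNReal.tsum_mul_left, ENNReal.tsum_geometric]
    _ = _ := by
        rw [← ENNReal.ofReal_one, ← ENNReal.ofReal_sub _ hθ0.le,
          ← ENNReal.ofReal_inv_of_pos (by linarith), mul_right_comm,
          ← ENNReal.ofReal_mul (by positivity)]

/-- The modular maximal inequality: where the Hardy–Littlewood maximal function of `g` exceeds
`2 ^ (k + 1)`, `S` is at least `A (2 ^ (k + 2))`, and the integral of `S` is controlled by that of
`A ∘ g`. -/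
lemma maximal_aux {n : ℕ} {A : ℝ → ℝ≥0∞} {q ρ : ℝ} (hq : 1 < q) (hA : Good A q ρ) :
    ∃ K : ℝ, 0 < K ∧ ∀ g : Euc n → ℝ, Measurable g → (∀ x, 0 ≤ g x) →
      ∃ S : Euc n → ℝ≥0∞, Measurable S ∧ ∫⁻ x, S x ≤ ENNReal.ofReal K * ∫⁻ x, A (g x) ∧
        ∀ x, ∀ k : ℤ, (∃ r : ℝ, r > 0 ∧ ENNReal.ofReal (2 ^ (k + 1)) *
          volume (Metric.closedBall x r) < ∫⁻ y in Metric.closedBall x r, ENNReal.ofReal (g y)) →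
            A (2 ^ (k + 2)) ≤ S x := by
  obtain ⟨K, hK, hKs⟩ := dyadic_sum hq hA
  refine ⟨5 ^ n * K, by positivity, fun g hg hg0 => ?_⟩
  set E : ℤ → Set (Euc n) := fun k => {x | ∃ r : ℝ, r > 0 ∧ ENNReal.ofReal (2 ^ (k + 1)) *
          volume (Metric.closedBall x r) < ∫⁻ y in Metric.closedBall x r, ENNReal.ofReal (g y)}
    with hE
  set h : ℤ → Euc n → ℝ≥0∞ := fun k y => ENNReal.ofReal (if (2:ℝ) ^ k < g y then g y else 0) with hh
  have hhm : ∀ k, Measurable (h k) := fun k =>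
    (Measurable.ite (measurableSet_lt measurable_const hg) hg measurable_const).ennreal_ofReal
  -- `h k` is the part of `g` above `2 ^ k`; the rest adds at most `2 ^ k` to each average. Hence on
  -- `E k`, where the maximal function of `g` exceeds `2 ^ (k + 1)`, that of `h k` exceeds `2 ^ k`.
  have hEk : ∀ k, ENNReal.ofReal (2 ^ k) * volume (E k) ≤ ENNReal.ofReal (5 ^ n) * ∫⁻ y, h k y := by
    intro k
    refine le_trans ?_ (hl_weak (h k) (ENNReal.ofReal (2 ^ k)))
    gcongr
    rintro x ⟨r, hr, hx⟩
    refine ⟨r, hr, ?_⟩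
    have hv : volume (Metric.closedBall x r) ≠ ⊤ := measure_closedBall_lt_top.ne
    have hle : ∫⁻ y in Metric.closedBall x r, ENNReal.ofReal (g y) ≤
        ENNReal.ofReal (2 ^ k) * volume (Metric.closedBall x r) +
          ∫⁻ y in Metric.closedBall x r, h k y := by
      calc _ ≤ ∫⁻ y in Metric.closedBall x r, (ENNReal.ofReal (2 ^ k) + h k y) := by
            refine lintegral_mono fun y => ?_
            by_cases hy : (2:ℝ) ^ k < g y
            · simp only [hh, hy, if_true]; exact le_add_self
            · simp only [hh, hy, if_false]
              exact (ENNReal.ofReal_le_ofReal (not_lt.1 hy)).trans le_self_add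
        _ = _ := by
            rw [lintegral_add_left measurable_const, setLIntegral_const]
    have h2 : ENNReal.ofReal ((2:ℝ) ^ (k + 1)) = ENNReal.ofReal (2 ^ k) + ENNReal.ofReal (2 ^ k) := by
      rw [← ENNReal.ofReal_add (by positivity) (by positivity), zpow_add₀ (by norm_num)]
      congr 1; norm_num; ring
    rw [h2, add_mul] at hx
    exact (ENNReal.add_lt_add_iff_left (ENNReal.mul_ne_top ENNReal.ofReal_ne_top hv)).1
      (hx.trans_le hle)
  -- Measurable hulls of the sets `E k` make the measurability of `S` immediate and cost no measure.
  refine ⟨fun x => ∑' k : ℤ, (toMeasurable volume (E k)).indicator (fun _ => A (2 ^ (k + 2))) x,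
    Measurable.tsum fun k => measurable_const.indicator (measurableSet_toMeasurable _ _), ?_, ?_⟩
  · rw [lintegral_tsum fun k =>
      (measurable_const.indicator (measurableSet_toMeasurable _ _)).aemeasurable]
    have e : ∀ k : ℤ, A (2 ^ (k + 2)) = ENNReal.ofReal (realOf A (2 ^ (k + 2))) := fun k =>
      (realOf_eq hA.fin (by positivity)).symm
    calc ∑' k : ℤ, ∫⁻ x, (toMeasurable volume (E k)).indicator (fun _ => A (2 ^ (k + 2))) x
        ≤ ∑' k : ℤ, ENNReal.ofReal (5 ^ n) *
            ∫⁻ y, ENNReal.ofReal (realOf A (2 ^ (k + 2)) * 2 ^ (-k)) * h k y := by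
          refine ENNReal.tsum_le_tsum fun k => ?_
          rw [lintegral_indicator_const (measurableSet_toMeasurable _ _), measure_toMeasurable,
            lintegral_const_mul _ (hhm k), e k, ENNReal.ofReal_mul (realOf_nonneg _ _)]
          calc _ = ENNReal.ofReal (realOf A (2 ^ (k + 2))) * ENNReal.ofReal (2 ^ (-k)) *
                (ENNReal.ofReal (2 ^ k) * volume (E k)) := by
                have : ENNReal.ofReal ((2:ℝ) ^ (-k)) * ENNReal.ofReal (2 ^ k) = 1 := by
                  rw [← ENNReal.ofReal_mul (by positivity), ← zpow_add₀ (by norm_num)]; simp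
                rw [mul_assoc, ← mul_assoc (ENNReal.ofReal ((2:ℝ) ^ (-k))), this, one_mul]
            _ ≤ _ := by
                refine (mul_le_mul_right (hEk k) _).trans_eq ?_
                ring
      _ = ENNReal.ofReal (5 ^ n) * ∫⁻ y, ∑' k : ℤ,
            ENNReal.ofReal (realOf A (2 ^ (k + 2)) * 2 ^ (-k)) * h k y := by
          rw [ENNReal.tsum_mul_left, lintegral_tsum fun k => ((hhm k).const_mul _).aemeasurable]
      _ ≤ ENNReal.ofReal (5 ^ n) * ∫⁻ y, ENNReal.ofReal K * A (g y) := by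
          gcongr with y
          refine le_trans (le_of_eq ?_) (hKs (g y) (hg0 y))
          refine tsum_congr fun k => ?_
          simp only [hh]
          rw [← ENNReal.ofReal_mul (by have := realOf_nonneg A (2 ^ (k + 2)); positivity)]
          split_ifs <;> simp
      _ = _ := by
          rw [lintegral_const_mul' _ _ ENNReal.ofReal_ne_top, ← mul_assoc,
            ← ENNReal.ofReal_mul (by positivity)]
  · intro x k hx
    have hxE : x ∈ toMeasurable volume (E k) := subset_toMeasurable _ _ hx
    refine le_trans ?_ (ENNReal.le_tsum k)
    simp [hxE]

/-- Selection of a single level `l` comparable with the value of the maximal function at `x`. -/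
lemma maximal {n : ℕ} {A : ℝ → ℝ≥0∞} {q ρ : ℝ} (hq : 1 < q) (hA : Good A q ρ) :
    ∃ K : ℝ, 0 < K ∧ ∀ g : Euc n → ℝ, Measurable g → (∀ x, 0 ≤ g x) →
      ∃ S : Euc n → ℝ≥0∞, Measurable S ∧ ∫⁻ x, S x ≤ ENNReal.ofReal K * ∫⁻ x, A (g x) ∧
        ∀ x, S x = ⊤ ∨ (∀ r > 0, ∫⁻ y in Metric.closedBall x r, ENNReal.ofReal (g y) = 0) ∨
          ∃ l : ℝ, 0 < l ∧ A l ≤ S x ∧ ∀ r > 0,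
            ∫⁻ y in Metric.closedBall x r, ENNReal.ofReal (g y) ≤
              ENNReal.ofReal l * volume (Metric.closedBall x r) := by
  obtain ⟨K, hK, h⟩ := maximal_aux (n := n) hq hA
  refine ⟨K, hK, fun g hg hg0 => ?_⟩
  obtain ⟨S, hSm, hS, hx⟩ := h g hg hg0
  refine ⟨S, hSm, hS, fun x => ?_⟩
  rcases eq_or_ne (S x) ⊤ with hT | hT
  · exact Or.inl hT
  refine Or.inr ?_
  set T : ℤ → Prop := fun k => ∃ r : ℝ, r > 0 ∧ ENNReal.ofReal (2 ^ (k + 1)) *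
          volume (Metric.closedBall x r) < ∫⁻ y in Metric.closedBall x r, ENNReal.ofReal (g y)
    with hTd
  by_cases hne : ∃ k, T k
  · right
    obtain ⟨K1, hK1, hlow⟩ := hA.low
    -- The levels attained are bounded, since `A (2 ^ (k + 2)) ≤ S x < ∞` and `A` grows at least linearly.
    have hbdd : ∃ b : ℤ, ∀ z, T z → z ≤ b := by
      obtain ⟨N, hN⟩ := pow_unbounded_of_one_lt (K1 * (S x).toReal / realOf A 1)
        (by norm_num : (1:ℝ) < 2)
      refine ⟨N, fun z hz => ?_⟩
      by_contra hlt
      push Not at hlt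
      have h1 := hx x z hz
      rw [← realOf_eq hA.fin (by positivity), ENNReal.ofReal_le_iff_le_toReal hT] at h1
      have h2 := hlow 1 (2 ^ (z + 2)) one_pos (one_le_zpow₀ (by norm_num) (by omega))
      have hp1 := hA.pos 1 one_pos
      have h3 : (2:ℝ) ^ N ≤ 2 ^ (z + 2) := by
        rw [← zpow_natCast]; gcongr
        · norm_num
        · omega
      have h4 : (1 / (2:ℝ) ^ (z + 2)) ^ q ≤ 1 / (2:ℝ) ^ (z + 2) := by
        have h1z : 1 / (2:ℝ) ^ (z + 2) ≤ 1 := by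
          rw [div_le_one (by positivity)]
          exact one_le_zpow₀ (by norm_num) (by omega)
        simpa using Real.rpow_le_rpow_of_exponent_ge (by positivity) h1z hq.le
      rw [div_lt_iff₀ hp1] at hN
      have h5 : realOf A 1 ≤ K1 * (1 / (2:ℝ) ^ (z + 2)) * (S x).toReal :=
        h2.trans (by gcongr; exact realOf_nonneg _ _)
      have h6 : 2 ^ (z + 2) * realOf A 1 ≤ K1 * (S x).toReal := by
        calc 2 ^ (z + 2) * realOf A 1 ≤ 2 ^ (z + 2) * (K1 * (1 / (2:ℝ) ^ (z + 2)) * (S x).toReal) := by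
              gcongr
          _ = _ := by field_simp
      nlinarith
    -- The greatest level attained bounds the maximal function within a factor of two.
    obtain ⟨k, hk, hmax⟩ := Int.exists_greatest_of_bdd hbdd hne
    refine ⟨2 ^ (k + 2), by positivity, hx x k hk, fun r hr => ?_⟩
    by_contra hlt
    have := hmax (k + 1) ⟨r, hr, by rw [add_assoc]; simpa using hlt⟩
    omega
  · left
    intro r hr
    -- No level is attained, so every average is at most `2 ^ (k + 1)` for all `k`, hence zero.
    have hle : ∀ k : ℤ, ∫⁻ y in Metric.closedBall x r, ENNReal.ofReal (g y) ≤
        ENNReal.ofReal (2 ^ (k + 1)) * volume (Metric.closedBall x r) := fun k => by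
      by_contra hlt
      exact hne ⟨k, r, hr, not_le.1 hlt⟩
    have hv : volume (Metric.closedBall x r) ≠ ⊤ := measure_closedBall_lt_top.ne
    have hlim : Tendsto (fun N : ℕ => ENNReal.ofReal ((2:ℝ) ^ (-(N:ℤ) - 1 + 1)) *
        volume (Metric.closedBall x r)) atTop (nhds 0) := by
      have : Tendsto (fun N : ℕ => (2:ℝ) ^ (-(N:ℤ) - 1 + 1)) atTop (nhds 0) := by
        have e : (fun N : ℕ => (2:ℝ) ^ (-(N:ℤ) - 1 + 1)) = fun N : ℕ => (1 / 2 : ℝ) ^ N := by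
          ext N; simp
        rw [e]
        exact tendsto_pow_atTop_nhds_zero_of_lt_one (by norm_num) (by norm_num)
      have h1 := ENNReal.tendsto_ofReal this
      have h2 := ENNReal.Tendsto.mul_const h1 (Or.inr hv)
      simpa using h2
    exact le_antisymm (ge_of_tendsto' hlim fun N => hle _) zero_le

/-! ### Pointwise bound of the Riesz potential by the maximal function -/

/-- The radial integral left in Hedberg's argument, split at the scale `s₀`. -/
lemma lintegral_kernel {m : ℕ} (hm : 0 < m) {γ s₀ : ℝ} (hγ : (m:ℝ) < γ) (hs : 0 < s₀) :
    ∫⁻ s in Ioi (0:ℝ), ENNReal.ofReal (s ^ (m - 1) * min 1 ((s₀ / s) ^ γ)) ≤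
      ENNReal.ofReal ((1 / m + 1 / (γ - m)) * s₀ ^ m) := by
  have hm' : (0:ℝ) < m := by exact_mod_cast hm
  have hcast : ((m - 1 : ℕ) : ℝ) = m - 1 := by rw [Nat.cast_sub hm]; simp
  rw [← Ioc_union_Ioi_eq_Ioi hs.le, add_mul, ENNReal.ofReal_add (by positivity)
    (by have : 0 < γ - m := by linarith
        positivity)]
  refine (lintegral_union_le _ _ _).trans (add_le_add ?_ ?_)
  · calc _ ≤ ∫⁻ s in Ioc 0 s₀, ENNReal.ofReal (s ^ (m - 1)) := by
          refine setLIntegral_mono' measurableSet_Ioc fun s hs => ?_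
          exact ENNReal.ofReal_le_ofReal
            (mul_le_of_le_one_right (by have := hs.1; positivity) (min_le_left _ _))
      _ = ENNReal.ofReal (∫ s in Ioc 0 s₀, s ^ (m - 1)) := by
          rw [ofReal_integral_eq_lintegral_ofReal]
          · exact (continuous_pow _).integrableOn_Ioc
          · exact (ae_restrict_iff' measurableSet_Ioc).2
              (Eventually.of_forall fun s hs => pow_nonneg hs.1.le _)
      _ ≤ _ := by
          refine ENNReal.ofReal_le_ofReal (le_of_eq ?_)
          rw [← intervalIntegral.integral_of_le hs.le, integral_pow, Nat.sub_add_cancel hm,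
            hcast, zero_pow hm.ne', sub_zero, sub_add_cancel]
          ring
  · have hlt : (m:ℝ) - 1 - γ < -1 := by linarith
    calc _ ≤ ∫⁻ s in Ioi s₀, ENNReal.ofReal (s₀ ^ γ * s ^ ((m:ℝ) - 1 - γ)) := by
          refine setLIntegral_mono' measurableSet_Ioi fun s hs' => ?_
          have hs0 : 0 < s := hs.trans hs'
          refine ENNReal.ofReal_le_ofReal ?_
          calc s ^ (m - 1) * min 1 ((s₀ / s) ^ γ) ≤ s ^ (m - 1) * (s₀ / s) ^ γ := by
                gcongr; exact min_le_right _ _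
            _ = _ := by
                rw [Real.div_rpow hs.le hs0.le, Real.rpow_sub hs0, ← hcast, Real.rpow_natCast]
                ring
      _ = ENNReal.ofReal (∫ s in Ioi s₀, s₀ ^ γ * s ^ ((m:ℝ) - 1 - γ)) := by
          rw [ofReal_integral_eq_lintegral_ofReal]
          · exact (integrableOn_Ioi_rpow_of_lt hlt hs).const_mul _
          · exact (ae_restrict_iff' measurableSet_Ioi).2
              (Eventually.of_forall fun s hs' => by
                have hs0 : 0 < s := hs.trans hs'
                positivity)
      _ ≤ _ := by
          refine ENNReal.ofReal_le_ofReal (le_of_eq ?_)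
          rw [integral_const_mul, integral_Ioi_rpow_of_lt hlt hs]
          have e1 : (m:ℝ) - 1 - γ + 1 = m - γ := by ring
          have e2 : s₀ ^ ((m:ℝ) - γ) = s₀ ^ m / s₀ ^ γ := by
            rw [Real.rpow_sub hs, Real.rpow_natCast]
          have : γ - m ≠ 0 := by linarith
          have h3 : (m:ℝ) - γ ≠ 0 := by linarith
          have h4 : s₀ ^ γ ≠ 0 := by positivity
          rw [e1, e2]
          field_simp
          ring

/-- Hedberg's argument: averages bounded both by a level `l` and through the modular give a bound
of the truncated Riesz potential in terms of `l` alone. -/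
lemma hedberg {n m : ℕ} (hm : 0 < m) {A : ℝ → ℝ≥0∞} {q ρ ν : ℝ} (hρ0 : 0 < ρ)
    (hρ : m * ρ < n) (hν : 0 < ν) (hA : Good A q ρ) :
    ∃ C : ℝ, 0 < C ∧ ∀ (a : ℝ → ℝ) (l : ℝ), 0 < l → (∀ r > 0, 0 ≤ a r) → (∀ r > 0, a r ≤ l) →
      (∀ r > 0, realOf A (a r) * (ν * r ^ n) ≤ 1) → ∀ R > 0,
        ENNReal.ofReal ((2 * R) ^ m) *
            ∫⁻ s in Ioc (0:ℝ) 1, ENNReal.ofReal (s ^ (m - 1) * a (2 * R * s)) ≤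
          ENNReal.ofReal (C * (l * realOf A l ^ (-((m:ℝ) / n)))) := by
  obtain ⟨K, hK, hup⟩ := hA.up
  have hm' : (0:ℝ) < m := by exact_mod_cast hm
  have hn' : (0:ℝ) < n := lt_of_le_of_lt (by positivity) hρ
  set γ : ℝ := n / ρ with hγ
  have hγm : (m:ℝ) < γ := by rw [hγ, lt_div_iff₀ hρ0]; exact hρ
  have hγ' : 0 < γ - m := by linarith
  refine ⟨(1 / m + 1 / (γ - m)) * (K / ν) ^ ((m:ℝ) / n), by positivity,
    fun a l hl ha0 hal haA R hR => ?_⟩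
  have hF := hA.pos l hl
  set F := realOf A l with hFd
  -- `σ` is the radius at which the two bounds for `a r` balance.
  set σ : ℝ := (K / (ν * F)) ^ (1 / (n:ℝ)) with hσ
  have hσ0 : 0 < σ := by positivity
  -- The growth of `A` turns the modular bound on `a r` into decay of order `γ = n / ρ > m`.
  have key : ∀ r > 0, a r ≤ l * min 1 ((σ / r) ^ γ) := by
    intro r hr
    rw [mul_min_of_nonneg _ _ hl.le, mul_one]
    refine le_min (hal r hr) ?_
    rcases (ha0 r hr).eq_or_lt with h0 | h0
    · rw [← h0]; positivity
    have h1 : F ≤ K * (l / a r) ^ ρ * realOf A (a r) := hup _ _ h0 (hal r hr)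
    have h2 := haA r hr
    have h3 : (a r / l) ^ ρ ≤ K / (ν * F) / r ^ n := by
      have h5 : (a r / l) ^ ρ * (l / a r) ^ ρ = 1 := by
        rw [← Real.mul_rpow (by positivity) (by positivity)]
        have : a r / l * (l / a r) = 1 := by field_simp
        rw [this, Real.one_rpow]
      have h6 : (a r / l) ^ ρ * F ≤ K * realOf A (a r) := by
        calc (a r / l) ^ ρ * F ≤ (a r / l) ^ ρ * (K * (l / a r) ^ ρ * realOf A (a r)) := by gcongr
          _ = K * ((a r / l) ^ ρ * (l / a r) ^ ρ) * realOf A (a r) := by ring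
          _ = _ := by rw [h5, mul_one]
      rw [le_div_iff₀ (by positivity), le_div_iff₀ (by positivity)]
      calc (a r / l) ^ ρ * r ^ n * (ν * F) = ((a r / l) ^ ρ * F) * (ν * r ^ n) := by ring
        _ ≤ (K * realOf A (a r)) * (ν * r ^ n) := by gcongr
        _ = K * (realOf A (a r) * (ν * r ^ n)) := by ring
        _ ≤ K * 1 := by gcongr
        _ = K := mul_one K
    have h4 : K / (ν * F) / r ^ n = ((σ / r) ^ γ) ^ ρ := by
      have e : σ ^ n = K / (ν * F) := by
        rw [hσ, ← Real.rpow_natCast, ← Real.rpow_mul (by positivity), one_div,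
          inv_mul_cancel₀ hn'.ne', Real.rpow_one]
      rw [← Real.rpow_mul (by positivity), hγ, div_mul_cancel₀ _ hρ0.ne',
        Real.rpow_natCast, div_pow, e]
    rw [h4] at h3
    have := (Real.rpow_le_rpow_iff (by positivity) (by positivity) hρ0).1 h3
    rwa [div_le_iff₀ hl, mul_comm] at this
  have hs0 : 0 < σ / (2 * R) := by positivity
  calc _ ≤ ENNReal.ofReal ((2 * R) ^ m) * ∫⁻ s in Ioc (0:ℝ) 1,
          ENNReal.ofReal l * ENNReal.ofReal (s ^ (m - 1) * min 1 ((σ / (2 * R) / s) ^ γ)) := by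
        refine mul_le_mul_right (setLIntegral_mono' measurableSet_Ioc fun s hs => ?_) _
        have hs1 := hs.1
        rw [← ENNReal.ofReal_mul hl.le]
        refine ENNReal.ofReal_le_ofReal ?_
        have := key (2 * R * s) (by positivity)
        rw [← div_div] at this
        calc s ^ (m - 1) * a (2 * R * s) ≤
            s ^ (m - 1) * (l * min 1 ((σ / (2 * R) / s) ^ γ)) := by gcongr
          _ = _ := by ring
    _ ≤ ENNReal.ofReal ((2 * R) ^ m) * (ENNReal.ofReal l *
          ∫⁻ s in Ioi (0:ℝ), ENNReal.ofReal (s ^ (m - 1) * min 1 ((σ / (2 * R) / s) ^ γ))) := by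
        rw [lintegral_const_mul' _ _ ENNReal.ofReal_ne_top]
        gcongr
        exact Ioc_subset_Ioi_self
    _ ≤ ENNReal.ofReal ((2 * R) ^ m) * (ENNReal.ofReal l *
          ENNReal.ofReal ((1 / m + 1 / (γ - m)) * (σ / (2 * R)) ^ m)) := by
        gcongr
        exact lintegral_kernel hm hγm hs0
    _ = _ := by
        rw [← ENNReal.ofReal_mul hl.le, ← ENNReal.ofReal_mul (by positivity)]
        congr 1
        have e : σ ^ m = (K / ν) ^ ((m:ℝ) / n) * F ^ (-((m:ℝ) / n)) := by
          have : K / (ν * F) = K / ν * F⁻¹ := by field_simp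
          rw [hσ, ← Real.rpow_natCast _ m, ← Real.rpow_mul (by positivity), this,
            Real.mul_rpow (by positivity) (by positivity), Real.inv_rpow hF.le, Real.rpow_neg hF.le]
          congr 2
          · ring_nf
          · ring_nf
        rw [div_pow, e]
        field_simp

/-! ### Taylor's formula -/

/-- One-dimensional Taylor formula with integral remainder, for a chain of functions with
`φ k' = -φ (k + 1)`. -/
lemma taylor_chain {φ : ℕ → ℝ → ℝ} (h : ∀ k s, HasDerivAt (φ k) (-φ (k + 1) s) s) {m : ℕ}
    (hm : 0 < m) :
    φ 0 0 - ∑ k ∈ Finset.range m, φ k 1 / k.factorial =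
      ∫ s in (0:ℝ)..1, s ^ (m - 1) / (m - 1).factorial * φ m s := by
  have hd : ∀ m : ℕ, ∀ s, HasDerivAt (fun s => ∑ k ∈ Finset.range (m + 1), s ^ k / k.factorial * φ k s)
      (-(s ^ m / m.factorial * φ (m + 1) s)) s := by
    intro m
    induction m with
    | zero => intro s; simpa using h 0 s
    | succ m ih =>
      intro s
      have h1 := (ih s).add
        ((((hasDerivAt_id s).pow (m + 1)).div_const ((m + 1).factorial : ℝ)).mul (h (m + 1) s))
      have e : (fun s => ∑ k ∈ Finset.range (m + 1 + 1), s ^ k / k.factorial * φ k s) =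
          (fun s => ∑ k ∈ Finset.range (m + 1), s ^ k / k.factorial * φ k s) +
            ((fun s : ℝ => s ^ (m + 1) / ((m + 1).factorial : ℝ)) * φ (m + 1)) := by
        ext s; rw [Finset.sum_range_succ]; rfl
      rw [e]
      refine h1.congr_deriv ?_
      have hf : ((m + 1).factorial : ℝ) = (m + 1) * m.factorial := by
        rw [Nat.factorial_succ]; push_cast; ring
      have hm0 : (m.factorial : ℝ) ≠ 0 := by positivity
      have hm1 : ((m:ℝ) + 1) ≠ 0 := by positivity
      simp only [hf, Pi.pow_apply, id, Nat.add_sub_cancel]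
      push_cast
      field_simp
      ring
  obtain ⟨m, rfl⟩ : ∃ j, m = j + 1 := ⟨m - 1, by omega⟩
  have hc : ∀ k, Continuous (φ k) := fun k =>
    continuous_iff_continuousAt.2 fun s => (h k s).continuousAt
  have h_intg := intervalIntegral.integral_eq_sub_of_hasDerivAt (a := 0) (b := 1)
    (fun s _ => hd m s) (Continuous.intervalIntegrable (by have := hc (m + 1); fun_prop) _ _)
  rw [intervalIntegral.integral_neg] at h_intg
  have e0 : ∑ k ∈ Finset.range (m + 1), (0:ℝ) ^ k / k.factorial * φ k 0 = φ 0 0 := by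
    rw [Finset.sum_range_succ']; simp
  have e1 : ∑ k ∈ Finset.range (m + 1), (1:ℝ) ^ k / k.factorial * φ k 1 =
      ∑ k ∈ Finset.range (m + 1), φ k 1 / k.factorial :=
    Finset.sum_congr rfl fun k _ => by rw [one_pow]; ring
  rw [e0, e1] at h_intg
  simp only [Nat.add_sub_cancel]
  linarith

/-- The Taylor polynomial of degree `m - 1` of `v` centred at `y`, evaluated at `x`. -/
def taylorT {n : ℕ} (m : ℕ) (v : Euc n → ℝ) (x y : Euc n) : ℝ :=
  ∑ k ∈ Finset.range m, iteratedFDeriv ℝ k v y (fun _ => x - y) / k.factorial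

/-- The Taylor remainder is an integral of the derivatives of order `m` along the segment from `x`
to `y`, parametrized by `s ↦ x + s (y - x)`. -/
lemma taylor_bound {n m : ℕ} (hm : 0 < m) {v : Euc n → ℝ} (hv : ContDiff ℝ (⊤ : ℕ∞) v)
    {g : Euc n → ℝ} (hg : Continuous g)
    (hvg : ∀ y z, |iteratedFDeriv ℝ m v y (fun _ => z)| ≤ g y * ‖z‖ ^ m) (x y : Euc n) :
    |v x - taylorT m v x y| ≤
      ∫ s in Ioc (0:ℝ) 1, s ^ (m - 1) * (g (x + s • (y - x)) * ‖x - y‖ ^ m) := by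
  set w := x - y with hw
  set φ : ℕ → ℝ → ℝ := fun k s => iteratedFDeriv ℝ k v (x - s • w) (fun _ => w) with hφ
  have hφd : ∀ k s, HasDerivAt (φ k) (-φ (k + 1) s) s := by
    intro k s
    have h1 : HasFDerivAt (iteratedFDeriv ℝ k v) (fderiv ℝ (iteratedFDeriv ℝ k v) (x - s • w))
        (x - s • w) := by
      refine (hv.differentiable_iteratedFDeriv (m := k) ?_).differentiableAt.hasFDerivAt
      exact_mod_cast WithTop.coe_lt_top k
    have h2 : HasDerivAt (fun s : ℝ => x - s • w) (-w) s := by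
      simpa using ((hasDerivAt_id s).smul_const w).const_sub x
    have h3 := h1.comp_hasDerivAt s h2
    have h4 := ((ContinuousMultilinearMap.apply ℝ (fun _ : Fin k => Euc n) ℝ
      (fun _ => w)).hasFDerivAt).comp_hasDerivAt s h3
    refine h4.congr_deriv ?_
    simp only [hφ, iteratedFDeriv_succ_apply_left, map_neg]
    rfl
  have hT := taylor_chain hφd hm
  have e0 : φ 0 0 = v x := by simp [hφ]
  have e1 : ∑ k ∈ Finset.range m, φ k 1 / k.factorial = taylorT m v x y := by
    refine Finset.sum_congr rfl fun k _ => ?_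
    have : x - (1:ℝ) • w = y := by rw [one_smul, hw]; abel
    simp only [hφ, this]
    rfl
  rw [e0, e1] at hT
  rw [hT, intervalIntegral.integral_of_le zero_le_one, ← Real.norm_eq_abs]
  refine norm_integral_le_of_norm_le ?_ ?_
  · exact Continuous.integrableOn_Ioc (by fun_prop)
  · refine (ae_restrict_iff' measurableSet_Ioc).2 (Eventually.of_forall fun s hs => ?_)
    have hs0 := hs.1.le
    have e2 : x + s • (y - x) = x - s • w := by rw [hw]; module
    rw [Real.norm_eq_abs, abs_mul, abs_of_nonneg (by positivity), e2]
    have hfac : (1:ℝ) ≤ (m - 1).factorial := by exact_mod_cast Nat.one_le_iff_ne_zero.2 (Nat.factorial_ne_zero _)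
    calc s ^ (m - 1) / (m - 1).factorial * |φ m s| ≤ s ^ (m - 1) * |φ m s| := by
          gcongr; exact div_le_self (by positivity) hfac
      _ ≤ _ := by gcongr; exact hvg _ _

/-! ### Polynomials -/

/-- The exponents of the monomials of degree at most `m - 1`. -/
def expo (n m : ℕ) : Finset (Fin n →₀ ℕ) := (Finsupp.finite_of_degree_le (σ := Fin n) (m - 1)).toFinset

/-- The polynomial of degree at most `m - 1` with prescribed coefficients. -/
def polyOf {n : ℕ} (m : ℕ) (c : (Fin n →₀ ℕ) → ℝ) : MvPolynomial (Fin n) ℝ :=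
  ∑ d ∈ expo n m, MvPolynomial.monomial d (c d)

lemma mem_expo {n m : ℕ} {d : Fin n →₀ ℕ} : d ∈ expo n m ↔ d.degree ≤ m - 1 := by
  simp [expo]

lemma polyOf_degree {n m : ℕ} (c : (Fin n →₀ ℕ) → ℝ) : (polyOf m c).totalDegree ≤ m - 1 := by
  refine MvPolynomial.totalDegree_finsetSum_le fun d hd => ?_
  refine (MvPolynomial.totalDegree_monomial_le _ _).trans ?_
  exact mem_expo.1 hd

lemma polyOf_eval {n m : ℕ} (c : (Fin n →₀ ℕ) → ℝ) (x : Fin n → ℝ) :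
    MvPolynomial.eval x (polyOf m c) = ∑ d ∈ expo n m, c d * d.prod fun i k => x i ^ k := by
  simp [polyOf, MvPolynomial.eval_monomial]

lemma polyOf_coeff {n m : ℕ} {P : MvPolynomial (Fin n) ℝ} (hP : P.totalDegree ≤ m - 1) :
    polyOf m (fun d => P.coeff d) = P := by
  ext d
  rw [polyOf, MvPolynomial.coeff_sum]
  simp only [MvPolynomial.coeff_monomial, Finset.sum_ite_eq', mem_expo]
  split_ifs with h
  · rfl
  · symm
    refine MvPolynomial.coeff_eq_zero_of_totalDegree_lt ?_
    have : d.degree = ∑ i ∈ d.support, d i := rfl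
    omega

lemma continuous_eval {n : ℕ} (P : MvPolynomial (Fin n) ℝ) :
    Continuous fun x : Euc n => MvPolynomial.eval (fun i => x i) P :=
  (MvPolynomial.continuous_eval P).comp (by fun_prop)

/-- Averages of a continuous family of polynomials of degree at most `m - 1` are polynomials of
degree at most `m - 1`. -/
lemma average_poly {n m : ℕ} (P : Euc n → MvPolynomial (Fin n) ℝ)
    (hd : ∀ y, (P y).totalDegree ≤ m - 1) (hc : ∀ d, Continuous fun y => (P y).coeff d)
    (μ : Measure (Euc n)) (hμ : ∀ f : Euc n → ℝ, Continuous f → Integrable f μ) :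
    ∃ Q : MvPolynomial (Fin n) ℝ, Q.totalDegree ≤ m - 1 ∧
      ∀ x, MvPolynomial.eval x Q = ∫ y, MvPolynomial.eval x (P y) ∂μ := by
  refine ⟨polyOf m (fun d => ∫ y, (P y).coeff d ∂μ), polyOf_degree _, fun x => ?_⟩
  rw [polyOf_eval]
  have : ∀ y, MvPolynomial.eval x (P y) =
      ∑ d ∈ expo n m, (P y).coeff d * d.prod fun i k => x i ^ k := fun y => by
    conv_lhs => rw [← polyOf_coeff (hd y), polyOf_eval]
  simp only [this]
  rw [integral_finsetSum _ fun d _ => (hμ _ (hc d)).mul_const _]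
  exact Finset.sum_congr rfl fun d _ => (integral_mul_const _ _).symm

/-- A multilinear form on the diagonal, expanded in the coordinates of its argument. -/
lemma multilinear_expand {n k : ℕ} (L : ContinuousMultilinearMap ℝ (fun _ : Fin k => Euc n) ℝ)
    (z : Euc n) :
    L (fun _ => z) = ∑ a : Fin k → Fin n, (∏ j, z (a j)) *
      L (fun j => EuclideanSpace.single (a j) 1) := by
  have hz : z = ∑ i, z i • EuclideanSpace.single i (1:ℝ) := by
    ext j; simp [Finset.sum_apply, Pi.single_apply]
  conv_lhs => rw [show (fun _ : Fin k => z) = fun _ : Fin k =>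
    ∑ i, z i • EuclideanSpace.single i (1:ℝ) from funext fun _ => hz]
  rw [ContinuousMultilinearMap.map_sum]
  refine Finset.sum_congr rfl fun a _ => ?_
  rw [ContinuousMultilinearMap.map_smul_univ, smul_eq_mul]

/-- The Taylor polynomial as a polynomial in `x` with coefficients continuous in the centre. -/
lemma taylorT_poly {n m : ℕ} {v : Euc n → ℝ} (hv : ContDiff ℝ (⊤ : ℕ∞) v) :
    ∃ P : Euc n → MvPolynomial (Fin n) ℝ, (∀ y, (P y).totalDegree ≤ m - 1) ∧
      (∀ d, Continuous fun y => (P y).coeff d) ∧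
        ∀ x y : Euc n, MvPolynomial.eval (fun i => x i) (P y) = taylorT m v x y := by
  refine ⟨fun y => ∑ k ∈ Finset.range m, ∑ a : Fin k → Fin n,
    MvPolynomial.C (iteratedFDeriv ℝ k v y (fun j => EuclideanSpace.single (a j) 1) / k.factorial) *
      ∏ j, (MvPolynomial.X (a j) - MvPolynomial.C (y (a j))), fun y => ?_, fun d => ?_, fun x y => ?_⟩
  · refine MvPolynomial.totalDegree_finsetSum_le fun k hk => ?_
    refine MvPolynomial.totalDegree_finsetSum_le fun a _ => ?_
    refine (MvPolynomial.totalDegree_mul _ _).trans ?_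
    rw [MvPolynomial.totalDegree_C, zero_add]
    refine (MvPolynomial.totalDegree_finsetProd _ _).trans ?_
    have : ∀ j ∈ (Finset.univ : Finset (Fin k)),
        (MvPolynomial.X (a j) - MvPolynomial.C (y (a j)) : MvPolynomial (Fin n) ℝ).totalDegree ≤ 1 :=
      fun j _ => by
        refine (MvPolynomial.totalDegree_sub _ _).trans ?_
        simp [MvPolynomial.totalDegree_X]
    refine (Finset.sum_le_sum this).trans ?_
    have := Finset.mem_range.1 hk
    simp; omega
  · have hprod : ∀ (k : ℕ) (a : Fin k → Fin n) (s : Finset (Fin k)) (d : Fin n →₀ ℕ),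
        Continuous fun y : Euc n => (∏ j ∈ s, (MvPolynomial.X (a j) - MvPolynomial.C (y (a j)) :
          MvPolynomial (Fin n) ℝ)).coeff d := by
      intro k a s
      induction s using Finset.induction_on with
      | empty => intro d; simpa using continuous_const
      | insert j s hj ih =>
        intro d
        simp only [Finset.prod_insert hj, MvPolynomial.coeff_mul]
        refine continuous_finsetSum _ fun p _ => Continuous.mul ?_ (ih _)
        simp only [MvPolynomial.coeff_sub, MvPolynomial.coeff_C]
        split_ifs <;> fun_prop
    simp only [MvPolynomial.coeff_sum, MvPolynomial.coeff_C_mul]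
    refine continuous_finsetSum _ fun k _ => continuous_finsetSum _ fun a _ =>
      Continuous.mul ?_ (hprod k a _ d)
    have h1 : Continuous (iteratedFDeriv ℝ k v) := hv.continuous_iteratedFDeriv (by
      exact_mod_cast le_top)
    fun_prop
  · simp only [map_sum, map_mul, map_prod, map_sub, MvPolynomial.eval_C, MvPolynomial.eval_X]
    refine Finset.sum_congr rfl fun k _ => ?_
    rw [multilinear_expand, Finset.sum_div]
    refine Finset.sum_congr rfl fun a _ => ?_
    simp only [PiLp.sub_apply]
    ring

/-! ### Averaged Taylor polynomials on balls -/

/-- The mean value of `g` over the closed ball of radius `r` centred at `x`. -/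
def avgB {n : ℕ} (g : Euc n → ℝ) (x : Euc n) (r : ℝ) : ℝ≥0∞ :=
  (∫⁻ y in Metric.closedBall x r, ENNReal.ofReal (g y)) / volume (Metric.closedBall x r)

lemma lintegral_dilate {n : ℕ} {F : Euc n → ℝ≥0∞} (hF : Measurable F) {s : ℝ} (hs : 0 < s)
    (c : Euc n) :
    ∫⁻ y, F (s • y + c) = ENNReal.ofReal ((s ^ n)⁻¹) * ∫⁻ y, F y := by
  have h1 : ∫⁻ y, F (s • y + c) = ∫⁻ y, F (y + c) ∂(Measure.map (s • ·) (volume : Measure (Euc n))) :=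
    (lintegral_map (hF.comp (measurable_add_const c)) (measurable_const_smul s)).symm
  rw [h1, Measure.map_addHaar_smul _ hs.ne', lintegral_smul_measure, lintegral_add_right_eq_self F c,
    smul_eq_mul]
  simp [abs_of_pos hs]

/-- The contraction `y ↦ x + s (y - x)` maps the ball of radius `R` about `0` into the ball of radius
`2 R s` about `x`, so the mean of `g` along it is at most `2 ^ n` times the mean over the latter. -/
lemma ball_pull {n : ℕ} {g : Euc n → ℝ} (hg : Measurable g) {x : Euc n} {R s : ℝ} (hR : 0 < R)
    (hs : 0 < s) (hx : x ∈ Metric.closedBall (0 : Euc n) R) :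
    (volume (Metric.closedBall (0 : Euc n) R))⁻¹ *
        ∫⁻ y in Metric.closedBall (0 : Euc n) R, ENNReal.ofReal (g (x + s • (y - x))) ≤
      ENNReal.ofReal (2 ^ n) * avgB g x (2 * R * s) := by
  set F : Euc n → ℝ≥0∞ := (Metric.closedBall x (2 * R * s)).indicator
    (fun y => ENNReal.ofReal (g y)) with hF
  have hFm : Measurable F := hg.ennreal_ofReal.indicator measurableSet_closedBall
  have h1 : ∫⁻ y in Metric.closedBall (0 : Euc n) R, ENNReal.ofReal (g (x + s • (y - x))) ≤
      ENNReal.ofReal ((s ^ n)⁻¹) * ∫⁻ y in Metric.closedBall x (2 * R * s), ENNReal.ofReal (g y) := by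
    rw [← lintegral_indicator measurableSet_closedBall (fun y => ENNReal.ofReal (g y)), ← hF,
      ← lintegral_dilate hFm hs (x - s • x)]
    refine le_trans ?_ (setLIntegral_le_lintegral (Metric.closedBall (0 : Euc n) R) _)
    refine setLIntegral_mono' measurableSet_closedBall fun y hy => ?_
    have e : s • y + (x - s • x) = x + s • (y - x) := by module
    rw [e, hF, indicator_of_mem]
    rw [mem_closedBall_iff_norm, add_sub_cancel_left, norm_smul, Real.norm_of_nonneg hs.le, mul_comm]
    gcongr
    rw [mem_closedBall_zero_iff] at hx hy
    linarith [norm_sub_le y x]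
  have hv := volume_closedBall_mul x (0 : Euc n) (c := 2 * s) (r := R) (by positivity) hR.le
  have e2 : 2 * s * R = 2 * R * s := by ring
  rw [e2] at hv
  have hv0 : volume (Metric.closedBall (0 : Euc n) R) ≠ 0 :=
    (Metric.measure_closedBall_pos _ _ hR).ne'
  have hvT : volume (Metric.closedBall (0 : Euc n) R) ≠ ⊤ := measure_closedBall_lt_top.ne
  rw [avgB, hv, div_eq_mul_inv, ENNReal.mul_inv (Or.inr hvT) (Or.inr hv0),
    ← ENNReal.ofReal_inv_of_pos (by positivity)]
  calc _ ≤ (volume (Metric.closedBall (0 : Euc n) R))⁻¹ * (ENNReal.ofReal ((s ^ n)⁻¹) *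
        ∫⁻ y in Metric.closedBall x (2 * R * s), ENNReal.ofReal (g y)) := by gcongr
    _ = _ := by
      have : ENNReal.ofReal ((s ^ n)⁻¹) = ENNReal.ofReal (2 ^ n) * ENNReal.ofReal (((2 * s) ^ n)⁻¹) := by
        rw [← ENNReal.ofReal_mul (by positivity), mul_pow]
        congr 1
        field_simp
      rw [this]; ring

/-- A smooth function differs from an averaged Taylor polynomial by at most a truncated Riesz
potential of its `m`-th derivatives. -/
lemma averaged_taylor {n m : ℕ} (hm : 0 < m) {v : Euc n → ℝ} (hv : ContDiff ℝ (⊤ : ℕ∞) v)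
    {g : Euc n → ℝ} (hg : Continuous g) (hg0 : ∀ x, 0 ≤ g x)
    (hvg : ∀ y z, |iteratedFDeriv ℝ m v y (fun _ => z)| ≤ g y * ‖z‖ ^ m) {R : ℝ} (hR : 0 < R) :
    ∃ Q : MvPolynomial (Fin n) ℝ, Q.totalDegree ≤ m - 1 ∧
      ∀ x ∈ Metric.closedBall (0 : Euc n) R,
        ENNReal.ofReal |v x - MvPolynomial.eval (fun i => x i) Q| ≤
          ENNReal.ofReal (2 ^ n) * (ENNReal.ofReal ((2 * R) ^ m) *
            ∫⁻ s in Ioc (0:ℝ) 1, ENNReal.ofReal (s ^ (m - 1)) * avgB g x (2 * R * s)) := by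
  obtain ⟨P, hPd, hPc, hP⟩ := taylorT_poly (m := m) hv
  set B := Metric.closedBall (0 : Euc n) R with hB
  have hv0 : volume B ≠ 0 := (Metric.measure_closedBall_pos _ _ hR).ne'
  have hvT : volume B ≠ ⊤ := measure_closedBall_lt_top.ne
  -- `Q` is the mean over the centre `y ∈ B` of the Taylor polynomials of `v` at `y`.
  set μ : Measure (Euc n) := (volume B)⁻¹ • volume.restrict B with hμ
  have hprob : IsProbabilityMeasure μ := ⟨by simp [hμ, ENNReal.inv_mul_cancel hv0 hvT]⟩
  have h_intg : ∀ f : Euc n → ℝ, Continuous f → Integrable f μ := fun f hf =>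
    Integrable.smul_measure (hf.continuousOn.integrableOn_compact (isCompact_closedBall _ _))
      (ENNReal.inv_ne_top.2 hv0)
  obtain ⟨Q, hQd, hQ⟩ := average_poly P hPd hPc μ h_intg
  refine ⟨Q, hQd, fun x hx => ?_⟩
  have hTc : Continuous fun y => taylorT m v x y := by
    have : ∀ y, taylorT m v x y = ∑ d ∈ expo n m, (P y).coeff d * d.prod fun i k => x i ^ k :=
      fun y => by
        rw [← hP x y]
        conv_lhs => rw [← polyOf_coeff (hPd y), polyOf_eval]
    simp only [this]
    exact continuous_finsetSum _ fun d _ => (hPc d).mul continuous_const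
  have e : v x - MvPolynomial.eval (fun i => x i) Q = ∫ y, (v x - taylorT m v x y) ∂μ := by
    rw [integral_sub (integrable_const _) (h_intg _ hTc), hQ]
    simp [hP]
  rw [e, ← Real.norm_eq_abs, ofReal_norm]
  have hmeas : Measurable (fun p : Euc n × ℝ =>
      ENNReal.ofReal (p.2 ^ (m - 1) * (g (x + p.2 • (p.1 - x)) * (2 * R) ^ m))) :=
    Measurable.ennreal_ofReal (by fun_prop)
  calc ‖∫ y, (v x - taylorT m v x y) ∂μ‖ₑ ≤ ∫⁻ y, ‖v x - taylorT m v x y‖ₑ ∂μ :=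
        enorm_integral_le_lintegral_enorm _
    _ = (volume B)⁻¹ * ∫⁻ y in B, ‖v x - taylorT m v x y‖ₑ := by
        rw [hμ, lintegral_smul_measure, smul_eq_mul]
    _ ≤ (volume B)⁻¹ * ∫⁻ y in B, ∫⁻ s in Ioc (0:ℝ) 1,
          ENNReal.ofReal (s ^ (m - 1) * (g (x + s • (y - x)) * (2 * R) ^ m)) := by
        refine mul_le_mul_right (setLIntegral_mono' measurableSet_closedBall fun y hy => ?_) _
        rw [← ofReal_norm, Real.norm_eq_abs]
        refine (ENNReal.ofReal_le_ofReal (taylor_bound hm hv hg hvg x y)).trans ?_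
        rw [ofReal_integral_eq_lintegral_ofReal]
        · refine setLIntegral_mono' measurableSet_Ioc fun s hs => ENNReal.ofReal_le_ofReal ?_
          have := hs.1.le
          have := hg0 (x + s • (y - x))
          gcongr
          rw [mem_closedBall_zero_iff] at hx hy
          linarith [norm_sub_le x y]
        · exact Continuous.integrableOn_Ioc (by fun_prop)
        · refine (ae_restrict_iff' measurableSet_Ioc).2 (Eventually.of_forall fun s hs => ?_)
          have := hs.1.le
          have := hg0 (x + s • (y - x))
          simp only [Pi.zero_apply]
          positivity
    _ = (volume B)⁻¹ * ∫⁻ s in Ioc (0:ℝ) 1, ∫⁻ y in B,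
          ENNReal.ofReal (s ^ (m - 1) * (g (x + s • (y - x)) * (2 * R) ^ m)) := by
        rw [lintegral_lintegral_swap hmeas.aemeasurable]
    _ = ∫⁻ s in Ioc (0:ℝ) 1, (volume B)⁻¹ * ∫⁻ y in B,
          ENNReal.ofReal (s ^ (m - 1) * (g (x + s • (y - x)) * (2 * R) ^ m)) := by
        rw [lintegral_const_mul' _ _ (ENNReal.inv_ne_top.2 hv0)]
    _ ≤ ∫⁻ s in Ioc (0:ℝ) 1, ENNReal.ofReal (2 ^ n) * (ENNReal.ofReal ((2 * R) ^ m) *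
          (ENNReal.ofReal (s ^ (m - 1)) * avgB g x (2 * R * s))) := by
        refine setLIntegral_mono' measurableSet_Ioc fun s hs => ?_
        have hs0 := hs.1
        have e3 : ∀ y, ENNReal.ofReal (s ^ (m - 1) * (g (x + s • (y - x)) * (2 * R) ^ m)) =
            ENNReal.ofReal (s ^ (m - 1) * (2 * R) ^ m) * ENNReal.ofReal (g (x + s • (y - x))) :=
          fun y => by
            rw [← ENNReal.ofReal_mul (by positivity)]; congr 1; ring
        simp only [e3]
        rw [lintegral_const_mul' _ _ ENNReal.ofReal_ne_top, mul_left_comm]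
        refine (mul_le_mul_right (ball_pull hg.measurable hR hs0 hx) _).trans_eq ?_
        rw [ENNReal.ofReal_mul (by positivity)]
        ring
    _ = _ := by
        rw [lintegral_const_mul' _ _ ENNReal.ofReal_ne_top,
          lintegral_const_mul' _ _ ENNReal.ofReal_ne_top]

/-! ### The Poincaré–Sobolev inequality for smooth functions -/

/-- By Jensen's inequality, means over a ball of radius `r` of a function with modular at most one
satisfy `A (mean) * |B_r| ≤ 1`. -/
lemma avgB_jensen {n : ℕ} {A : ℝ → ℝ≥0∞} (hA : IsYoungFunction A) (hfin : ∀ t, A t ≠ ⊤ ∨ t < 0)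
    {g : Euc n → ℝ} (hg : Continuous g) (hg0 : ∀ x, 0 ≤ g x) (h1 : ∫⁻ x, A (g x) ≤ 1)
    (x : Euc n) {r : ℝ} (hr : 0 < r) :
    avgB g x r ≠ ⊤ ∧ realOf A (avgB g x r).toReal *
      ((volume (Metric.closedBall (0 : Euc n) 1)).toReal * r ^ n) ≤ 1 := by
  set B := Metric.closedBall x r with hB
  have hv0 : volume B ≠ 0 := (Metric.measure_closedBall_pos _ _ hr).ne'
  have hvT : volume B ≠ ⊤ := measure_closedBall_lt_top.ne
  set μ : Measure (Euc n) := (volume B)⁻¹ • volume.restrict B with hμ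
  have hprob : IsProbabilityMeasure μ := ⟨by simp [hμ, ENNReal.inv_mul_cancel hv0 hvT]⟩
  have h_intg : Integrable g μ :=
    Integrable.smul_measure (hg.continuousOn.integrableOn_compact (isCompact_closedBall _ _))
      (ENNReal.inv_ne_top.2 hv0)
  have e : avgB g x r = ENNReal.ofReal (∫ y, g y ∂μ) := by
    rw [ofReal_integral_eq_lintegral_ofReal h_intg (Eventually.of_forall hg0), hμ,
      lintegral_smul_measure, smul_eq_mul, avgB, div_eq_mul_inv, mul_comm]
  rw [e]
  refine ⟨ENNReal.ofReal_ne_top, ?_⟩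
  have hi0 : 0 ≤ ∫ y, g y ∂μ := integral_nonneg hg0
  rw [ENNReal.toReal_ofReal hi0]
  have hJ := young_jensen hA hfin h_intg hg0
  rw [hμ, lintegral_smul_measure, smul_eq_mul, ← hμ] at hJ
  have h2 : A (∫ y, g y ∂μ) * volume B ≤ 1 := by
    calc _ ≤ ((volume B)⁻¹ * ∫⁻ y in B, A (g y)) * volume B := by gcongr
      _ = (volume B)⁻¹ * volume B * ∫⁻ y in B, A (g y) := by ring
      _ = ∫⁻ y in B, A (g y) := by rw [ENNReal.inv_mul_cancel hv0 hvT, one_mul]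
      _ ≤ _ := (setLIntegral_le_lintegral _ _).trans h1
  have hvol : volume B = ENNReal.ofReal (r ^ n) * volume (Metric.closedBall (0 : Euc n) 1) := by
    have := volume_closedBall_mul x (0 : Euc n) (c := r) (r := 1) hr.le zero_le_one
    rwa [mul_one] at this
  have h3 := ENNReal.toReal_mono ENNReal.one_ne_top h2
  rw [hvol, ← realOf_eq hfin hi0, ENNReal.toReal_mul, ENNReal.toReal_mul,
    ENNReal.toReal_ofReal (realOf_nonneg _ _), ENNReal.toReal_ofReal (by positivity),
    ENNReal.toReal_one, mul_comm (r ^ n)] at h3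
  exact h3

/-- Convexity and `B 0 = 0`: dividing the argument by `c ≥ 1` divides the value at least by `c`. -/
lemma young_div {B : ℝ → ℝ≥0∞} (hB : IsYoungFunction B) {c t : ℝ} (hc : 1 ≤ c) (ht : 0 ≤ t) :
    B (t / c) ≤ ENNReal.ofReal c⁻¹ * B t := by
  have hc' : c⁻¹ ≤ 1 := inv_le_one_of_one_le₀ hc
  have h := hB.2.2.1 ht le_rfl (by positivity : 0 ≤ c⁻¹) (sub_nonneg.2 hc') (by ring)
  rw [hB.1, mul_zero, mul_zero, add_zero, add_zero] at h
  rwa [div_eq_inv_mul]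

/-- The modular Poincaré–Sobolev estimate on balls for smooth functions, uniform in the radius.
The hypothesis `hAB` says that `B` grows no faster than the Sobolev conjugate of `A`. -/
lemma smooth_modular {n m : ℕ} (hm : 0 < m) {A B : ℝ → ℝ≥0∞} {q ρ : ℝ} (hq : 1 < q) (hρ0 : 0 < ρ)
    (hρ : m * ρ < n) (hA : Good A q ρ) (hB : IsYoungFunction B)
    (hAB : ∀ C : ℝ, 0 < C → ∃ K : ℝ, 0 < K ∧ ∀ l : ℝ, 0 < l →
      B (C * (l * realOf A l ^ (-((m:ℝ) / n)))) ≤ ENNReal.ofReal K * A l) :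
    ∃ C₀ : ℝ, 0 < C₀ ∧ ∀ (v g : Euc n → ℝ), ContDiff ℝ (⊤ : ℕ∞) v → Continuous g →
      (∀ x, 0 ≤ g x) → (∀ y z, |iteratedFDeriv ℝ m v y (fun _ => z)| ≤ g y * ‖z‖ ^ m) →
      ∫⁻ x, A (g x) ≤ 1 → ∀ R > 0, ∃ Q : MvPolynomial (Fin n) ℝ, Q.totalDegree ≤ m - 1 ∧
        ∫⁻ x in Metric.closedBall (0 : Euc n) R,
          B (|v x - MvPolynomial.eval (fun i => x i) Q| / C₀) ≤ 1 := by
  have hν : 0 < (volume (Metric.closedBall (0 : Euc n) 1)).toReal :=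
    ENNReal.toReal_pos (Metric.measure_closedBall_pos _ _ one_pos).ne' measure_closedBall_lt_top.ne
  obtain ⟨C, hC, hhed⟩ := hedberg hm hρ0 hρ hν hA
  obtain ⟨K, hK, hmax⟩ := maximal (n := n) hq hA
  obtain ⟨K', hK', hKB⟩ := hAB (2 ^ n * C) (by positivity)
  -- The modular of `v - Q` is at most `K' K`; division by `max 1 (K' K)` brings it below one.
  refine ⟨max 1 (K' * K), by positivity, fun v g hv hg hg0 hvg h1 R hR => ?_⟩
  obtain ⟨Q, hQd, hQ⟩ := averaged_taylor hm hv hg hg0 hvg hR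
  refine ⟨Q, hQd, ?_⟩
  obtain ⟨S, hSm, hS, hSx⟩ := hmax g hg.measurable hg0
  have hpt : ∀ x ∈ Metric.closedBall (0 : Euc n) R,
      B |v x - MvPolynomial.eval (fun i => x i) Q| ≤ ENNReal.ofReal K' * S x := by
    intro x hx
    have hb := hQ x hx
    -- In the main case, a level `l` bounds all means of `g` at `x`, and Hedberg's argument applies.
    rcases hSx x with h | h | ⟨l, hl, hAl, h⟩
    · rw [h, ENNReal.mul_top (by simpa using hK')]; exact le_top
    · have h0 : ∫⁻ s in Ioc (0:ℝ) 1, ENNReal.ofReal (s ^ (m - 1)) * avgB g x (2 * R * s) = 0 := by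
        rw [setLIntegral_congr_fun measurableSet_Ioc (g := fun _ => 0) fun s hs => ?_]
        · simp
        · have := hs.1
          simp only [avgB, h (2 * R * s) (by positivity), ENNReal.zero_div, mul_zero]
      rw [h0, mul_zero, mul_zero, nonpos_iff_eq_zero, ENNReal.ofReal_eq_zero] at hb
      rw [le_antisymm hb (abs_nonneg _), hB.1]
      exact zero_le
    · have ha : ∀ r > 0, (avgB g x r).toReal ≤ l := fun r hr => by
        refine ENNReal.toReal_le_of_le_ofReal hl.le ?_
        exact ENNReal.div_le_of_le_mul (h r hr)
      have := hhed (fun r => (avgB g x r).toReal) l hl (fun r _ => ENNReal.toReal_nonneg) ha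
        (fun r hr => (avgB_jensen hA.young hA.fin hg hg0 h1 x hr).2) R hR
      have e : ∫⁻ s in Ioc (0:ℝ) 1, ENNReal.ofReal (s ^ (m - 1)) * avgB g x (2 * R * s) =
          ∫⁻ s in Ioc (0:ℝ) 1, ENNReal.ofReal (s ^ (m - 1) * (avgB g x (2 * R * s)).toReal) := by
        refine setLIntegral_congr_fun measurableSet_Ioc fun s hs => ?_
        have hs0 := hs.1
        rw [ENNReal.ofReal_mul (by positivity), ENNReal.ofReal_toReal
          (avgB_jensen hA.young hA.fin hg hg0 h1 x (by positivity)).1]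
      rw [e] at hb
      have h3 := hb.trans (mul_le_mul_right this _)
      have hFl := hA.pos l hl
      rw [← ENNReal.ofReal_mul (by positivity), ENNReal.ofReal_le_ofReal_iff (by positivity),
        ← mul_assoc] at h3
      calc _ ≤ B (2 ^ n * C * (l * realOf A l ^ (-((m:ℝ) / n)))) := hB.2.1 (abs_nonneg _) h3
        _ ≤ ENNReal.ofReal K' * A l := hKB l hl
        _ ≤ _ := by gcongr
  calc _ ≤ ∫⁻ x in Metric.closedBall (0 : Euc n) R,
        ENNReal.ofReal (max 1 (K' * K))⁻¹ * (ENNReal.ofReal K' * S x) := by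
        refine setLIntegral_mono' measurableSet_closedBall fun x hx => ?_
        refine (young_div hB (le_max_left _ _) (abs_nonneg _)).trans ?_
        gcongr
        exact hpt x hx
    _ ≤ ENNReal.ofReal (max 1 (K' * K))⁻¹ * (ENNReal.ofReal K' * ∫⁻ x, S x) := by
        rw [lintegral_const_mul' _ _ ENNReal.ofReal_ne_top,
          lintegral_const_mul' _ _ ENNReal.ofReal_ne_top]
        gcongr
        exact Measure.restrict_le_self
    _ ≤ ENNReal.ofReal (max 1 (K' * K))⁻¹ * (ENNReal.ofReal K' * (ENNReal.ofReal K * 1)) := by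
        gcongr
        exact hS.trans (by gcongr)
    _ ≤ 1 := by
        rw [mul_one, ← ENNReal.ofReal_mul hK'.le, ← ENNReal.ofReal_mul (by positivity),
          ← ENNReal.ofReal_one]
        refine ENNReal.ofReal_le_ofReal ?_
        rw [inv_mul_le_iff₀ (by positivity), mul_one]
        exact le_max_right _ _

/-! ### Mollification -/

/-- Convolution of `f` with the kernel `κ`. -/
def moll {n : ℕ} (κ f : Euc n → ℝ) : Euc n → ℝ :=
  MeasureTheory.convolution f κ (ContinuousLinearMap.mul ℝ ℝ) volume

lemma moll_apply {n : ℕ} (κ f : Euc n → ℝ) (x : Euc n) :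
    moll κ f x = ∫ t, f t * κ (x - t) := by
  simp [moll, convolution_def]

lemma iteratedFDeriv_step {n : ℕ} {f : Euc n → ℝ} (hf : ContDiff ℝ (⊤ : ℕ∞) f) (k : ℕ)
    (x : Euc n) (a : Fin (k + 1) → Euc n) :
    iteratedFDeriv ℝ (k + 1) f x a =
      fderiv ℝ (fun y => iteratedFDeriv ℝ k f y (Fin.tail a)) x (a 0) := by
  have h1 : HasFDerivAt (iteratedFDeriv ℝ k f) (fderiv ℝ (iteratedFDeriv ℝ k f) x) x := by
    refine (hf.differentiable_iteratedFDeriv (m := k) ?_).differentiableAt.hasFDerivAt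
    exact_mod_cast WithTop.coe_lt_top k
  have h4 := ((ContinuousMultilinearMap.apply ℝ (fun _ : Fin k => Euc n) ℝ
      (Fin.tail a)).hasFDerivAt).comp x h1
  have h5 : fderiv ℝ (fun y => iteratedFDeriv ℝ k f y (Fin.tail a)) x = _ := h4.fderiv
  rw [h5, iteratedFDeriv_succ_apply_left]
  rfl

lemma smooth_apply {n : ℕ} {f : Euc n → ℝ} (hf : ContDiff ℝ (⊤ : ℕ∞) f) (k : ℕ)
    (a : Fin k → Euc n) : ContDiff ℝ (⊤ : ℕ∞) fun y => iteratedFDeriv ℝ k f y a := by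
  have h1 : ContDiff ℝ (⊤ : ℕ∞) (iteratedFDeriv ℝ k f) := hf.iteratedFDeriv_right (by
    exact_mod_cast le_top)
  exact (ContinuousMultilinearMap.apply ℝ (fun _ : Fin k => Euc n) ℝ a).contDiff.comp h1

lemma compact_apply {n : ℕ} {f : Euc n → ℝ} (hf : HasCompactSupport f) (k : ℕ)
    (a : Fin k → Euc n) : HasCompactSupport fun y => iteratedFDeriv ℝ k f y a :=
  (hf.iteratedFDeriv (𝕜 := ℝ) k).comp_left (g := fun L : ContinuousMultilinearMap ℝ (fun _ : Fin k => Euc n) ℝ => L a) rfl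

/-- Derivatives of a mollification fall on the kernel. -/
lemma iteratedFDeriv_moll {n : ℕ} {κ f : Euc n → ℝ} (hκ : ContDiff ℝ (⊤ : ℕ∞) κ)
    (hκc : HasCompactSupport κ) (hf : LocallyIntegrable f volume) (k : ℕ) (x : Euc n)
    (a : Fin k → Euc n) :
    iteratedFDeriv ℝ k (moll κ f) x a = ∫ t, f t * iteratedFDeriv ℝ k κ (x - t) a := by
  have hs : ContDiff ℝ (⊤ : ℕ∞) (moll κ f) := hκc.contDiff_convolution_right _ hf hκ
  induction k generalizing x with
  | zero => simp [moll_apply]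
  | succ k ih =>
    rw [iteratedFDeriv_step hs]
    set κ' : Euc n → ℝ := fun y => iteratedFDeriv ℝ k κ y (Fin.tail a) with hκ'
    have e : (fun y => iteratedFDeriv ℝ k (moll κ f) y (Fin.tail a)) = moll κ' f := by
      ext y; rw [ih, moll_apply]
    have hs' : ContDiff ℝ 1 κ' := (smooth_apply hκ k _).of_le (by exact_mod_cast le_top)
    have hc' : HasCompactSupport κ' := compact_apply hκc k _
    have h := hc'.hasFDerivAt_convolution_right (ContinuousLinearMap.mul ℝ ℝ) hf hs' x
    rw [e]
    unfold moll
    rw [h.fderiv, convolution_precompR_apply _ hf (hc'.fderiv ℝ) (hs'.continuous_fderiv one_ne_zero)]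
    rw [convolution_def]
    refine integral_congr_ae (Eventually.of_forall fun t => ?_)
    simp only [ContinuousLinearMap.mul_apply']
    rw [iteratedFDeriv_step hκ]

lemma iteratedFDeriv_reflect {n : ℕ} {κ : Euc n → ℝ} (hκ : ContDiff ℝ (⊤ : ℕ∞) κ) (x : Euc n)
    (k : ℕ) (t : Euc n) (a : Fin k → Euc n) :
    iteratedFDeriv ℝ k (fun t => κ (x - t)) t a = (-1) ^ k * iteratedFDeriv ℝ k κ (x - t) a := by
  have hs : ContDiff ℝ (⊤ : ℕ∞) (fun t => κ (x - t)) := hκ.comp (contDiff_const.sub contDiff_id)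
  induction k generalizing t with
  | zero => simp
  | succ k ih =>
    rw [iteratedFDeriv_step hs, iteratedFDeriv_step hκ]
    have e : (fun y => iteratedFDeriv ℝ k (fun t => κ (x - t)) y (Fin.tail a)) =
        fun y => (-1) ^ k * iteratedFDeriv ℝ k κ (x - y) (Fin.tail a) := by
      ext y; rw [ih]
    rw [e]
    have hd : DifferentiableAt ℝ (fun y => iteratedFDeriv ℝ k κ y (Fin.tail a)) (x - t) :=
      (smooth_apply hκ k _).differentiable (by simp) _
    have h1 : HasFDerivAt (fun y => x - y) (-ContinuousLinearMap.id ℝ (Euc n)) t :=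
      (hasFDerivAt_id t).const_sub x
    have h2 := (hd.hasFDerivAt.comp t h1).const_mul ((-1 : ℝ) ^ k)
    have h3 : fderiv ℝ (fun y => (-1 : ℝ) ^ k * iteratedFDeriv ℝ k κ (x - y) (Fin.tail a)) t = _ :=
      h2.fderiv
    rw [h3]
    simp [pow_succ]

/-- The derivatives of a mollification are the mollified weak derivatives: the definition of the
weak derivative is tested with `t ↦ κ (x - t)`. -/
lemma weak_moll {n m : ℕ} {κ u : Euc n → ℝ} {D : ∀ k : ℕ, (Fin k → Fin n) → Euc n → ℝ}
    (hκ : ContDiff ℝ (⊤ : ℕ∞) κ) (hκc : HasCompactSupport κ) (hu : HasWeakDerivs n m u D)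
    (x : Euc n) (a : Fin m → Fin n) :
    iteratedFDeriv ℝ m (moll κ u) x (fun j => EuclideanSpace.single (a j) 1) =
      ∫ t, D m a t * κ (x - t) := by
  have h := hu.2.2.2 m le_rfl a (fun t => κ (x - t)) (hκ.comp (contDiff_const.sub contDiff_id))
    (hκc.comp_homeomorph (Homeomorph.subLeft x))
  simp only [iteratedFDeriv_reflect hκ x] at h
  rw [iteratedFDeriv_moll hκ hκc hu.1]
  have e : ∀ t, u t * ((-1) ^ m * iteratedFDeriv ℝ m κ (x - t)
      fun j => EuclideanSpace.single (a j) 1) = (-1 : ℝ) ^ m * (u t * iteratedFDeriv ℝ m κ (x - t)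
      fun j => EuclideanSpace.single (a j) 1) := fun t => by ring
  simp only [e] at h
  rw [integral_const_mul] at h
  exact mul_left_cancel₀ (pow_ne_zero _ (by norm_num)) h

lemma locInt_abs {n : ℕ} {f : Euc n → ℝ} (hf : LocallyIntegrable f volume) :
    LocallyIntegrable (fun x => |f x|) volume := fun x => by
  obtain ⟨s, hs, h⟩ := hf x
  exact ⟨s, hs, h.norm⟩

lemma gradAbs_locInt {n m : ℕ} {u : Euc n → ℝ} {D : ∀ k : ℕ, (Fin k → Fin n) → Euc n → ℝ}
    (hu : HasWeakDerivs n m u D) : LocallyIntegrable (gradAbs n m D) volume := by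
  have : gradAbs n m D = ∑ a : Fin m → Fin n, fun x => |D m a x| := by
    ext x; simp [gradAbs]
  rw [this]
  exact locallyIntegrable_finsetSum' _ fun a _ => locInt_abs (hu.2.2.1 m a le_rfl)

lemma gradAbs_nonneg {n m : ℕ} (D : ∀ k : ℕ, (Fin k → Fin n) → Euc n → ℝ) (x : Euc n) :
    0 ≤ gradAbs n m D x := Finset.sum_nonneg fun _ _ => abs_nonneg _

lemma moll_integrable {n : ℕ} {κ f : Euc n → ℝ} (hκ : Continuous κ)
    (hκc : HasCompactSupport κ) (hf : LocallyIntegrable f volume) (x : Euc n) :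
    Integrable (fun t => f t * κ (x - t)) volume := by
  have := hκc.convolutionExists_right (ContinuousLinearMap.mul ℝ ℝ) hf hκ x
  simpa [ConvolutionExistsAt] using this

/-- Mollification commutes with the weak derivatives, hence the derivatives of order `m` of the
mollified function are controlled by the mollification of `gradAbs`. -/
lemma moll_deriv_bound {n m : ℕ} {κ u : Euc n → ℝ} {D : ∀ k : ℕ, (Fin k → Fin n) → Euc n → ℝ}
    (hκ : ContDiff ℝ (⊤ : ℕ∞) κ) (hκc : HasCompactSupport κ) (hκ0 : ∀ x, 0 ≤ κ x)
    (hu : HasWeakDerivs n m u D) (y z : Euc n) :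
    |iteratedFDeriv ℝ m (moll κ u) y (fun _ => z)| ≤ moll κ (gradAbs n m D) y * ‖z‖ ^ m := by
  rw [multilinear_expand]
  simp only [weak_moll hκ hκc hu]
  have e : moll κ (gradAbs n m D) y = ∑ a : Fin m → Fin n, ∫ t, |D m a t| * κ (y - t) := by
    rw [moll_apply]
    simp only [gradAbs, Finset.sum_mul]
    exact integral_finsetSum _ fun a _ =>
      moll_integrable hκ.continuous hκc (locInt_abs (hu.2.2.1 m a le_rfl)) y
  rw [e, Finset.sum_mul]
  refine (Finset.abs_sum_le_sum_abs _ _).trans (Finset.sum_le_sum fun a _ => ?_)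
  rw [abs_mul, mul_comm]
  refine mul_le_mul ?_ ?_ (abs_nonneg _) (integral_nonneg fun t => mul_nonneg (abs_nonneg _) (hκ0 _))
  · refine (abs_integral_le_integral_abs).trans (le_of_eq ?_)
    refine integral_congr_ae (Eventually.of_forall fun t => ?_)
    simp only [abs_mul, abs_of_nonneg (hκ0 _)]
  · rw [Finset.abs_prod]
    calc ∏ j, |z (a j)| ≤ ∏ _j : Fin m, ‖z‖ :=
          Finset.prod_le_prod (fun _ _ => abs_nonneg _) fun j _ => by
            rw [← Real.norm_eq_abs]; exact PiLp.norm_apply_le z (a j)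
      _ = _ := by simp

/-- Mollification does not increase the modular. -/
lemma moll_modular {n : ℕ} {κ f : Euc n → ℝ} (hκ : Continuous κ)
    (hκc : HasCompactSupport κ) (hκ0 : ∀ x, 0 ≤ κ x) (hκ1 : ∫ x, κ x = 1)
    (hf : LocallyIntegrable f volume) (hf0 : ∀ x, 0 ≤ f x) {A : ℝ → ℝ≥0∞} (hA : IsYoungFunction A)
    (hfin : ∀ t, A t ≠ ⊤ ∨ t < 0) :
    ∫⁻ x, A (moll κ f x) ≤ ∫⁻ x, A (f x) := by
  have hκi : Integrable κ volume := hκ.integrable_of_hasCompactSupport hκc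
  have hAm : AEMeasurable (fun t => A (f t)) volume := by
    have : (fun t => A (f t)) = fun t => ENNReal.ofReal (realOf A (f t)) :=
      funext fun t => (realOf_eq hfin (hf0 t)).symm
    rw [this]
    exact ((realOf_continuous hA hfin).measurable.comp_aemeasurable
      hf.aestronglyMeasurable.aemeasurable).ennreal_ofReal
  have hpt : ∀ x, A (moll κ f x) ≤ ∫⁻ t, ENNReal.ofReal (κ (x - t)) * A (f t) := by
    intro x
    have hwm : Measurable fun t => ENNReal.ofReal (κ (x - t)) :=
      Measurable.ennreal_ofReal (by fun_prop)
    -- `moll κ f x` is the mean of `f` for a probability measure, so Jensen's inequality applies.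
    set μ := (volume : Measure (Euc n)).withDensity fun t => ENNReal.ofReal (κ (x - t)) with hμ
    have hprob : IsProbabilityMeasure μ := ⟨by
      rw [hμ, withDensity_apply _ MeasurableSet.univ, Measure.restrict_univ,
        lintegral_sub_left_eq_self (fun t => ENNReal.ofReal (κ t)) x,
        ← ofReal_integral_eq_lintegral_ofReal hκi (Eventually.of_forall hκ0), hκ1,
        ENNReal.ofReal_one]⟩
    have hfi : Integrable f μ := by
      rw [hμ, integrable_withDensity_iff_integrable_smul' hwm
        (Eventually.of_forall fun t => ENNReal.ofReal_lt_top)]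
      refine (moll_integrable hκ hκc hf x).congr (Eventually.of_forall fun t => ?_)
      simp only [ENNReal.toReal_ofReal (hκ0 _), smul_eq_mul, mul_comm]
    have e : moll κ f x = ∫ t, f t ∂μ := by
      rw [hμ, integral_withDensity_eq_integral_toReal_smul hwm
        (Eventually.of_forall fun t => ENNReal.ofReal_lt_top), moll_apply]
      refine integral_congr_ae (Eventually.of_forall fun t => ?_)
      simp only [ENNReal.toReal_ofReal (hκ0 _), smul_eq_mul, mul_comm]
    rw [e]
    refine (young_jensen hA hfin hfi hf0).trans (le_of_eq ?_)
    rw [hμ, lintegral_withDensity_eq_lintegral_mul₀ hwm.aemeasurable hAm]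
    rfl
  calc _ ≤ ∫⁻ x, ∫⁻ t, ENNReal.ofReal (κ (x - t)) * A (f t) := lintegral_mono hpt
    _ = ∫⁻ t, ∫⁻ x, ENNReal.ofReal (κ (x - t)) * A (f t) := by
        refine lintegral_lintegral_swap (AEMeasurable.mul ?_ hAm.comp_snd)
        exact (Measurable.ennreal_ofReal (by fun_prop)).aemeasurable
    _ = ∫⁻ t, A (f t) := by
        refine lintegral_congr fun t => ?_
        rw [lintegral_mul_const _ (Measurable.ennreal_ofReal (by fun_prop)),
          lintegral_sub_right_eq_self (fun x => ENNReal.ofReal (κ x)) t,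
          ← ofReal_integral_eq_lintegral_ofReal hκi (Eventually.of_forall hκ0), hκ1,
          ENNReal.ofReal_one, one_mul]

/-- Mollified functions converge almost everywhere. -/
lemma moll_tendsto {n : ℕ} {u : Euc n → ℝ} (hu : LocallyIntegrable u volume) :
    ∃ κ : ℕ → Euc n → ℝ, (∀ N, ContDiff ℝ (⊤ : ℕ∞) (κ N) ∧ HasCompactSupport (κ N) ∧
      (∀ x, 0 ≤ κ N x) ∧ ∫ x, κ N x = 1) ∧
        ∀ᵐ x, Tendsto (fun N => moll (κ N) u x) atTop (nhds (u x)) := by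
  let φ : ℕ → ContDiffBump (0 : Euc n) := fun N =>
    ⟨1 / (N + 1), 2 * (1 / (N + 1)), by positivity, by
      have : (0:ℝ) < 1 / (N + 1) := by positivity
      linarith⟩
  refine ⟨fun N => (φ N).normed volume, fun N => ⟨(φ N).contDiff_normed,
    (φ N).hasCompactSupport_normed, (φ N).nonneg_normed, (φ N).integral_normed⟩, ?_⟩
  have hr : Tendsto (fun N => (φ N).rOut) atTop (nhds 0) := by
    have h := (tendsto_one_div_add_atTop_nhds_zero_nat (𝕜 := ℝ)).const_mul (2:ℝ)
    rw [mul_zero] at h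
    exact h
  filter_upwards [ContDiffBump.ae_convolution_tendsto_right_of_locallyIntegrable (K := 2) hr
    (Eventually.of_forall fun N => le_rfl) hu] with x hx
  refine hx.congr fun N => ?_
  rw [convolution_eq_swap, moll_apply]
  refine integral_congr_ae (Eventually.of_forall fun t => ?_)
  simp [mul_comm]

/-! ### Compactness of polynomials, passage to the limit, uniqueness -/

/-- The polynomial of degree at most `m - 1` with coefficient vector `c`. -/
def polyC {n m : ℕ} (c : expo n m → ℝ) : MvPolynomial (Fin n) ℝ :=
  polyOf m fun d => if h : d ∈ expo n m then c ⟨d, h⟩ else 0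

lemma polyC_eval {n m : ℕ} (c : expo n m → ℝ) (x : Fin n → ℝ) :
    MvPolynomial.eval x (polyC c) = ∑ d : expo n m, c d * d.1.prod fun i k => x i ^ k := by
  rw [polyC, polyOf_eval, ← Finset.sum_coe_sort]
  exact Finset.sum_congr rfl fun d _ => by simp

lemma polyC_surj {n m : ℕ} {P : MvPolynomial (Fin n) ℝ} (hP : P.totalDegree ≤ m - 1) :
    ∃ c : expo n m → ℝ, polyC c = P := by
  refine ⟨fun d => P.coeff d.1, ?_⟩
  conv_rhs => rw [← polyOf_coeff hP]
  unfold polyC polyOf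
  exact Finset.sum_congr rfl fun d hd => by simp [hd]

lemma polyC_eq_zero {n m : ℕ} {c : expo n m → ℝ} (h : polyC c = 0) : c = 0 := by
  ext d
  have := congrArg (MvPolynomial.coeff d.1) h
  simpa [polyC, polyOf, MvPolynomial.coeff_sum, MvPolynomial.coeff_monomial] using this

/-- A polynomial function which vanishes almost everywhere is the zero polynomial. -/
lemma poly_zero_of_ae {n : ℕ} {P : MvPolynomial (Fin n) ℝ}
    (h : ∀ᵐ x : Euc n, MvPolynomial.eval (fun i => x i) P = 0) : P = 0 := by
  have h1 : (fun x : Euc n => MvPolynomial.eval (fun i => x i) P) = fun _ => 0 :=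
    (Continuous.ae_eq_iff_eq volume (continuous_eval P) continuous_const).1 h
  refine MvPolynomial.funext fun x => ?_
  simpa using congrFun h1 (WithLp.toLp 2 x)

/-- A Young function composed with the absolute value is Borel measurable. -/
lemma young_measurable {B : ℝ → ℝ≥0∞} (hB : IsYoungFunction B) :
    Measurable fun t : ℝ => B |t| := by
  have h : Monotone fun t : ℝ => B (max t 0) := fun s t hst =>
    hB.2.1 (le_max_right _ _) (max_le_max_right _ hst)
  have := h.measurable.comp (continuous_abs (G := ℝ)).measurable
  have e : (fun t : ℝ => B |t|) = (fun t => B (max t 0)) ∘ fun t : ℝ => |t| := by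
    ext t; simp
  rwa [e]

/-- Young functions are lower semicontinuous. -/
lemma young_liminf {B : ℝ → ℝ≥0∞} (hB : IsYoungFunction B) {f : ℕ → ℝ} {t : ℝ} (ht : 0 ≤ t)
    (h : Tendsto f atTop (nhds t)) : B t ≤ liminf (fun N => B (f N)) atTop := by
  rcases ht.eq_or_lt with rfl | ht
  · simp [hB.1]
  · rw [hB.2.2.2.1 t ht]
    refine iSup_le fun s => ?_
    refine le_liminf_of_le (by isBoundedDefault) ?_
    filter_upwards [h.eventually (lt_mem_nhds s.2.2)] with N hN
    exact hB.2.1 s.2.1.le hN.le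

/-- Fatou's lemma for modulars over exhausting balls. -/
lemma fatou_young {n : ℕ} {B : ℝ → ℝ≥0∞} (hB : IsYoungFunction B) {f : ℕ → Euc n → ℝ}
    (hf : ∀ N, Continuous (f N)) {g : Euc n → ℝ} {R : ℕ → ℝ} (hR : Tendsto R atTop atTop)
    (ht : ∀ᵐ x, Tendsto (fun N => f N x) atTop (nhds (g x))) {b : ℝ≥0∞}
    (hb : ∀ᶠ N in atTop, ∫⁻ x in Metric.closedBall 0 (R N), B |f N x| ≤ b) :
    ∫⁻ x, B |g x| ≤ b := by
  set F : ℕ → Euc n → ℝ≥0∞ := fun N =>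
    (Metric.closedBall 0 (R N)).indicator fun x => B |f N x| with hF
  have hFm : ∀ N, Measurable (F N) := fun N =>
    ((young_measurable hB).comp (hf N).measurable).indicator measurableSet_closedBall
  calc ∫⁻ x, B |g x| ≤ ∫⁻ x, liminf (fun N => F N x) atTop := by
        refine lintegral_mono_ae ?_
        filter_upwards [ht] with x hx
        refine (young_liminf hB (abs_nonneg _) hx.abs).trans (le_of_eq ?_)
        refine liminf_congr ?_
        filter_upwards [hR.eventually_ge_atTop ‖x‖] with N hN
        simp only [hF]
        rw [indicator_of_mem]
        simpa using hN
    _ ≤ liminf (fun N => ∫⁻ x, F N x) atTop := lintegral_liminf_le hFm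
    _ ≤ b := by
        refine liminf_le_of_frequently_le' (Eventually.frequently ?_)
        filter_upwards [hb] with N hN
        simp only [hF]
        rwa [lintegral_indicator measurableSet_closedBall]

/-- If all large multiples of a polynomial have modular at most one, the polynomial vanishes. -/
lemma poly_zero_of_modular {n : ℕ} {B : ℝ → ℝ≥0∞} (hB : IsYoungFunction B)
    (hpos : ∀ t, 0 < t → B t ≠ 0) {P : MvPolynomial (Fin n) ℝ}
    (h : ∀ K : ℝ, 1 ≤ K → ∫⁻ x : Euc n, B |K * MvPolynomial.eval (fun i => x i) P| ≤ 1) :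
    P = 0 := by
  have hm : Measurable fun x : Euc n => B |MvPolynomial.eval (fun i => x i) P| :=
    (young_measurable hB).comp (continuous_eval P).measurable
  have h0 : ∫⁻ x : Euc n, B |MvPolynomial.eval (fun i => x i) P| = 0 := by
    have hle : ∀ N : ℕ, ∫⁻ x : Euc n, B |MvPolynomial.eval (fun i => x i) P| ≤
        ENNReal.ofReal (1 / ((N:ℝ) + 1)) := by
      intro N
      have hN : (1:ℝ) ≤ (N:ℝ) + 1 := by linarith [N.cast_nonneg (α := ℝ)]
      calc ∫⁻ x : Euc n, B |MvPolynomial.eval (fun i => x i) P| ≤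
            ∫⁻ x : Euc n, ENNReal.ofReal ((N:ℝ) + 1)⁻¹ *
              B |((N:ℝ) + 1) * MvPolynomial.eval (fun i => x i) P| := by
            refine lintegral_mono fun x => ?_
            have := young_div hB hN (abs_nonneg (((N:ℝ) + 1) * MvPolynomial.eval (fun i => x i) P))
            rw [abs_mul, abs_of_pos (by linarith : (0:ℝ) < (N:ℝ) + 1),
              mul_div_cancel_left₀ _ (by linarith : (N:ℝ) + 1 ≠ 0)] at this
            rwa [abs_mul, abs_of_pos (by linarith : (0:ℝ) < (N:ℝ) + 1)]
        _ = ENNReal.ofReal ((N:ℝ) + 1)⁻¹ *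
            ∫⁻ x : Euc n, B |((N:ℝ) + 1) * MvPolynomial.eval (fun i => x i) P| :=
            lintegral_const_mul' _ _ ENNReal.ofReal_ne_top
        _ ≤ ENNReal.ofReal ((N:ℝ) + 1)⁻¹ * 1 := by gcongr; exact h _ hN
        _ = _ := by rw [mul_one, one_div]
    have ht : Tendsto (fun N : ℕ => ENNReal.ofReal (1 / ((N:ℝ) + 1))) atTop (nhds 0) := by
      have := ENNReal.tendsto_ofReal (tendsto_one_div_add_atTop_nhds_zero_nat (𝕜 := ℝ))
      rwa [ENNReal.ofReal_zero] at this
    exact le_antisymm (ge_of_tendsto' ht hle) zero_le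
  rw [lintegral_eq_zero_iff hm] at h0
  refine poly_zero_of_ae ?_
  filter_upwards [h0] with x hx
  by_contra hne
  exact hpos _ (abs_pos.2 hne) hx

/-- The modular Poincaré–Sobolev estimate on the whole space for weakly differentiable functions.
The polynomials attached to mollifications on growing balls have bounded coefficients, as otherwise
a normalised limit would be a nonzero polynomial all of whose multiples have modular at most one. -/
lemma weak_modular {n m : ℕ} (hm : 0 < m) {A B : ℝ → ℝ≥0∞} {q ρ : ℝ} (hq : 1 < q) (hρ0 : 0 < ρ)
    (hρ : m * ρ < n) (hA : Good A q ρ) (hB : IsYoungFunction B) (hpos : ∀ t, 0 < t → B t ≠ 0)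
    (hAB : ∀ C : ℝ, 0 < C → ∃ K : ℝ, 0 < K ∧ ∀ l : ℝ, 0 < l →
      B (C * (l * realOf A l ^ (-((m:ℝ) / n)))) ≤ ENNReal.ofReal K * A l) :
    ∃ C₀ : ℝ, 0 < C₀ ∧ ∀ (u : Euc n → ℝ) (D : ∀ k : ℕ, (Fin k → Fin n) → Euc n → ℝ),
      HasWeakDerivs n m u D → ∫⁻ x, A (gradAbs n m D x) ≤ 1 →
      ∃ P : MvPolynomial (Fin n) ℝ, P.totalDegree ≤ m - 1 ∧
        ∫⁻ x, B (|u x - MvPolynomial.eval (fun i => x i) P| / C₀) ≤ 1 := by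
  obtain ⟨C₀, hC₀, hsm⟩ := smooth_modular hm hq hρ0 hρ hA hB hAB
  refine ⟨C₀, hC₀, fun u D hu h1 => ?_⟩
  obtain ⟨κ, hκ, hlim⟩ := moll_tendsto hu.1
  have hg := gradAbs_locInt hu
  have hv : ∀ N, ContDiff ℝ (⊤ : ℕ∞) (moll (κ N) u) := fun N =>
    (hκ N).2.1.contDiff_convolution_right _ hu.1 (hκ N).1
  have hex : ∀ N : ℕ, ∃ c : expo n m → ℝ, ∫⁻ x in Metric.closedBall (0 : Euc n) ((N:ℝ) + 1),
      B (|moll (κ N) u x - MvPolynomial.eval (fun i => x i) (polyC c)| / C₀) ≤ 1 := by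
    intro N
    obtain ⟨Q, hQ, hQ'⟩ := hsm (moll (κ N) u) (moll (κ N) (gradAbs n m D)) (hv N)
      ((hκ N).2.1.contDiff_convolution_right (n := (⊤ : ℕ∞)) _ hg (hκ N).1).continuous
      (fun x => by
        rw [moll_apply]
        exact integral_nonneg fun t => mul_nonneg (gradAbs_nonneg D t) ((hκ N).2.2.1 _))
      (fun y z => moll_deriv_bound (hκ N).1 (hκ N).2.1 (hκ N).2.2.1 hu y z)
      ((moll_modular (hκ N).1.continuous (hκ N).2.1 (hκ N).2.2.1 (hκ N).2.2.2 hg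
        (gradAbs_nonneg D) hA.young hA.fin).trans h1) ((N:ℝ) + 1) (by positivity)
    obtain ⟨c, rfl⟩ := polyC_surj hQ
    exact ⟨c, hQ'⟩
  choose c hc using hex
  have hR : ∀ φ : ℕ → ℕ, StrictMono φ → Tendsto (fun j => ((φ j : ℕ):ℝ) + 1) atTop atTop :=
    fun φ hφ => tendsto_atTop_add_const_right _ _
      (tendsto_natCast_atTop_atTop.comp hφ.tendsto_atTop)
  have hpc : ∀ (e : ℕ → expo n m → ℝ) (e' : expo n m → ℝ), Tendsto e atTop (nhds e') →
      ∀ x : Euc n, Tendsto (fun j => MvPolynomial.eval (fun i => x i) (polyC (e j))) atTop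
        (nhds (MvPolynomial.eval (fun i => x i) (polyC e'))) := by
    intro e e' he x
    simp only [polyC_eval]
    exact tendsto_finsetSum _ fun d _ => ((tendsto_pi_nhds.1 he) d).mul_const _
  by_cases hbd : ∃ M : ℝ, ∃ᶠ N in atTop, ‖c N‖ ≤ M
  · obtain ⟨M, hM⟩ := hbd
    obtain ⟨a, -, φ, hφ, ha⟩ := tendsto_subseq_of_frequently_bounded
      (Metric.isBounded_closedBall (x := (0 : expo n m → ℝ)) (r := M)) (x := c)
      (hM.mono fun N hN => by simpa using hN)
    refine ⟨polyC a, polyOf_degree _, ?_⟩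
    have := fatou_young hB (b := 1) (R := fun j => ((φ j : ℕ):ℝ) + 1)
      (f := fun j x => (moll (κ (φ j)) u x -
        MvPolynomial.eval (fun i => x i) (polyC (c (φ j)))) / C₀)
      (g := fun x => (u x - MvPolynomial.eval (fun i => x i) (polyC a)) / C₀)
      (fun j => ((hv _).continuous.sub (continuous_eval _)).div_const _) (hR φ hφ)
      (by
        filter_upwards [hlim] with x hx
        exact ((hx.comp hφ.tendsto_atTop).sub (hpc _ _ ha x)).div_const _)
      (Eventually.of_forall fun j => by simpa only [abs_div, abs_of_pos hC₀] using hc (φ j))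
    simpa only [abs_div, abs_of_pos hC₀] using this
  · exfalso
    push Not at hbd
    -- Division by `‖c N‖ → ∞` removes `u` in the limit; the coefficients of the limit have norm one.
    have hinf : Tendsto (fun N => ‖c N‖) atTop atTop := by
      refine tendsto_atTop.2 fun M => ?_
      have := hbd M
      filter_upwards [this] with N hN
      exact hN.le
    obtain ⟨a, -, φ, hφ, ha⟩ := tendsto_subseq_of_frequently_bounded
      (Metric.isBounded_closedBall (x := (0 : expo n m → ℝ)) (r := 1))
      (x := fun N => ‖c N‖⁻¹ • c N) (Eventually.frequently (by
        filter_upwards [hinf.eventually_gt_atTop 0] with N hN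
        rw [mem_closedBall_zero_iff, norm_smul, norm_inv, norm_norm, inv_mul_cancel₀ hN.ne']))
    have hnorm : ‖a‖ = 1 := by
      refine tendsto_nhds_unique ha.norm (tendsto_const_nhds.congr' ?_)
      filter_upwards [(hinf.comp hφ.tendsto_atTop).eventually_gt_atTop 0] with j hj
      simp only [Function.comp] at hj ⊢
      rw [norm_smul, norm_inv, norm_norm, inv_mul_cancel₀ hj.ne']
    have hzero : polyC a = 0 := by
      refine poly_zero_of_modular hB hpos fun K hK => ?_
      have hinf' := hinf.comp hφ.tendsto_atTop
      have := fatou_young hB (b := 1) (R := fun j => ((φ j : ℕ):ℝ) + 1)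
        (f := fun j x => K * (‖c (φ j)‖⁻¹ * moll (κ (φ j)) u x -
          MvPolynomial.eval (fun i => x i) (polyC (‖c (φ j)‖⁻¹ • c (φ j)))))
        (g := fun x => K * (0 * u x - MvPolynomial.eval (fun i => x i) (polyC a)))
        (fun j => continuous_const.mul
          ((continuous_const.mul (hv _).continuous).sub (continuous_eval _))) (hR φ hφ)
        (by
          filter_upwards [hlim] with x hx
          exact (((tendsto_inv_atTop_zero.comp hinf').mul
            (hx.comp hφ.tendsto_atTop)).sub (hpc _ _ ha x)).const_mul K)
        (by
          filter_upwards [hinf'.eventually_gt_atTop 0, hinf'.eventually_ge_atTop (K * C₀)]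
            with j hj0 hj
          simp only [Function.comp] at hj0 hj
          refine (lintegral_mono fun x => hB.2.1 (abs_nonneg _) ?_).trans (hc (φ j))
          have e : MvPolynomial.eval (fun i => x i) (polyC (‖c (φ j)‖⁻¹ • c (φ j))) =
              ‖c (φ j)‖⁻¹ * MvPolynomial.eval (fun i => x i) (polyC (c (φ j))) := by
            simp only [polyC_eval, Pi.smul_apply, smul_eq_mul, Finset.mul_sum, mul_assoc]
          rw [e, ← mul_sub, ← mul_assoc, abs_mul, abs_of_pos (by positivity), mul_comm,
            div_eq_mul_inv]
          refine mul_le_mul_of_nonneg_left ?_ (abs_nonneg _)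
          rw [← div_eq_mul_inv, div_le_iff₀ hj0, inv_mul_eq_div, le_div_iff₀ hC₀]
          exact hj)
      simpa using this
    have := polyC_eq_zero hzero
    rw [this] at hnorm
    simp at hnorm

/-- A polynomial with a positive multiple of finite modular over the whole space vanishes. -/
lemma poly_zero_of_finite {n : ℕ} (hn : n ≠ 0) {B : ℝ → ℝ≥0∞} (hB : IsYoungFunction B)
    (hpos : ∀ t, 0 < t → B t ≠ 0) {P : MvPolynomial (Fin n) ℝ} {l : ℝ} (hl : 0 < l)
    (h : ∫⁻ x : Euc n, B |MvPolynomial.eval (fun i => x i) P / l| ≠ ⊤) : P = 0 := by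
  set F : Euc n → ℝ≥0∞ := fun x => B |MvPolynomial.eval (fun i => x i) P / l| with hF
  have hFm : Measurable F :=
    (young_measurable hB).comp ((continuous_eval P).div_const l).measurable
  -- the dilations `x ↦ (k + 1) x` multiply the modular by `(k + 1) ^ (-n)`
  have hk : ∀ k : ℕ, ∫⁻ y : Euc n, F (((k:ℝ) + 1) • y) =
      ENNReal.ofReal ((((k:ℝ) + 1) ^ n)⁻¹) * ∫⁻ y, F y := by
    intro k
    simpa using lintegral_dilate hFm (by positivity : (0:ℝ) < (k:ℝ) + 1) 0
  have ht : Tendsto (fun k : ℕ => ∫⁻ y : Euc n, F (((k:ℝ) + 1) • y)) atTop (nhds 0) := by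
    simp only [hk]
    have h1 : Tendsto (fun k : ℕ => (((k:ℝ) + 1) ^ n)⁻¹) atTop (nhds 0) :=
      tendsto_inv_atTop_zero.comp ((tendsto_pow_atTop hn).comp
        (tendsto_atTop_add_const_right _ _ tendsto_natCast_atTop_atTop))
    have h2 := ENNReal.Tendsto.mul_const (ENNReal.tendsto_ofReal h1) (Or.inr h)
    simpa using h2
  have hdm : ∀ k : ℕ, Measurable fun y : Euc n => F (((k:ℝ) + 1) • y) := fun k =>
    hFm.comp (by fun_prop)
  have h0 : ∫⁻ y : Euc n, liminf (fun k : ℕ => F (((k:ℝ) + 1) • y)) atTop = 0 := by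
    refine le_antisymm ((lintegral_liminf_le hdm).trans ?_) zero_le
    rw [ht.liminf_eq]
  rw [lintegral_eq_zero_iff (Measurable.liminf hdm)] at h0
  refine poly_zero_of_ae ?_
  filter_upwards [h0] with x hx
  -- restrict the polynomial to the line through the origin and `x`
  set p : Polynomial ℝ := MvPolynomial.aeval (fun i => Polynomial.C (x i) * Polynomial.X) P with hp
  have hpe : ∀ t : ℝ, p.eval t = MvPolynomial.eval (fun i => (t • x) i) P := by
    intro t
    have := MvPolynomial.hom_eval₂ P (algebraMap ℝ (Polynomial ℝ)) (Polynomial.evalRingHom t)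
      (fun i => Polynomial.C (x i) * Polynomial.X)
    rw [Polynomial.coe_evalRingHom, ← MvPolynomial.aeval_def, ← hp] at this
    rw [this, ← MvPolynomial.eval₂_id]
    congr 1
    · ext; simp
    · ext i
      rw [Polynomial.eval_mul, Polynomial.eval_C, Polynomial.eval_X,
        PiLp.smul_apply, smul_eq_mul, mul_comm]
  have hx1 : MvPolynomial.eval (fun i => x i) P = p.eval 1 := by rw [hpe]; simp
  rw [hx1]
  by_contra hne
  -- A one-variable polynomial is constant or tends to infinity in absolute value.
  have hδ : ∃ δ : ℝ, 0 < δ ∧ ∀ᶠ k : ℕ in atTop, δ ≤ |p.eval ((k:ℝ) + 1)| := by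
    rcases le_or_gt p.degree 0 with hd | hd
    · refine ⟨|p.eval 1|, abs_pos.2 hne, Eventually.of_forall fun k => ?_⟩
      rw [Polynomial.eq_C_of_degree_le_zero hd]
      simp
    · refine ⟨1, one_pos, ?_⟩
      exact ((p.abs_tendsto_atTop hd).comp
        (tendsto_atTop_add_const_right _ 1 tendsto_natCast_atTop_atTop)).eventually_ge_atTop 1
  obtain ⟨δ, hδ0, hδ⟩ := hδ
  refine hpos (δ / l) (by positivity) (le_antisymm ?_ zero_le)
  have hx' : liminf (fun k : ℕ => F (((k:ℝ) + 1) • x)) atTop = 0 := hx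
  rw [← hx']
  refine le_liminf_of_le (by isBoundedDefault) ?_
  filter_upwards [hδ] with k hk
  refine hB.2.1 (by positivity) ?_
  rw [abs_div, abs_of_pos hl, ← hpe]
  gcongr

/-! ### Passage to Luxemburg norms -/

/-- A Young function comparable to a model function of growth between `t ^ q` and `t ^ ρ` is
admissible, and the comparison holds for its real-valued version. -/
lemma good_of_comp {A : ℝ → ℝ≥0∞} {F : ℝ → ℝ} {q ρ : ℝ} (hA : IsYoungFunction A)
    (hF : ∀ t, 0 < t → 0 < F t) (hlow : LowGrowth F q) (hup : UpGrowth F ρ) (h : Comp A F) :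
    Good A q ρ ∧ ∃ K : ℝ, 0 < K ∧ ∀ t, 0 < t → F t ≤ K * realOf A t ∧ realOf A t ≤ K * F t := by
  obtain ⟨K, hK, h⟩ := h
  have hfin : ∀ t, A t ≠ ⊤ ∨ t < 0 := by
    intro t
    rcases lt_trichotomy t 0 with ht | rfl | ht
    · exact Or.inr ht
    · left; rw [hA.1]; exact ENNReal.zero_ne_top
    · exact Or.inl ((h t ht).2.trans_lt ENNReal.ofReal_lt_top).ne
  have hc : ∀ t, 0 < t → F t ≤ K * realOf A t ∧ realOf A t ≤ K * F t := by
    intro t ht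
    have h' := h t ht
    rw [← realOf_eq hfin ht.le, ← ENNReal.ofReal_mul hK.le] at h'
    have h0 := hF t ht
    exact ⟨(ENNReal.ofReal_le_ofReal_iff (mul_nonneg hK.le (realOf_nonneg A t))).1 h'.1,
      (ENNReal.ofReal_le_ofReal_iff (by positivity)).1 h'.2⟩
  obtain ⟨K₁, hK₁, h₁⟩ := hlow
  obtain ⟨K₂, hK₂, h₂⟩ := hup
  refine ⟨⟨hA, hfin, fun t ht => ?_, ⟨K * K₁ * K, by positivity, fun s t hs hst => ?_⟩,
    ⟨K * K₂ * K, by positivity, fun s t hs hst => ?_⟩⟩, K, hK, hc⟩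
  · have := (hF t ht).trans_le (hc t ht).1
    exact pos_of_mul_pos_right this hK.le
  · have ht := hs.trans_le hst
    calc realOf A s ≤ K * F s := (hc s hs).2
      _ ≤ K * (K₁ * (s / t) ^ q * F t) := by gcongr; exact h₁ s t hs hst
      _ ≤ K * (K₁ * (s / t) ^ q * (K * realOf A t)) := by gcongr; exact (hc t ht).1
      _ = _ := by ring
  · have ht := hs.trans_le hst
    calc realOf A t ≤ K * F t := (hc t ht).2
      _ ≤ K * (K₂ * (t / s) ^ ρ * F s) := by gcongr; exact h₂ s t hs hst
      _ ≤ K * (K₂ * (t / s) ^ ρ * (K * realOf A s)) := by gcongr; exact (hc s hs).1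
      _ = _ := by ring

lemma hasWeakDerivs_smul {n m : ℕ} {u : Euc n → ℝ} {D : ∀ k : ℕ, (Fin k → Fin n) → Euc n → ℝ}
    (hu : HasWeakDerivs n m u D) (c : ℝ) :
    HasWeakDerivs n m (fun x => c * u x) (fun k a x => c * D k a x) := by
  refine ⟨hu.1.smul c, fun a => by simp only [hu.2.1 a], fun k a hk => (hu.2.2.1 k a hk).smul c,
    fun k hk a φ hφ hφc => ?_⟩
  simp only [mul_assoc, integral_const_mul]
  rw [hu.2.2.2 k hk a φ hφ hφc]
  ring

/-- At most one polynomial is at finite Luxemburg distance from a given function. -/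
lemma poly_unique {n : ℕ} (hn : n ≠ 0) {B : ℝ → ℝ≥0∞} (hB : IsYoungFunction B)
    (hpos : ∀ t, 0 < t → B t ≠ 0) {u : Euc n → ℝ} (hu : AEMeasurable u volume)
    {P Q : MvPolynomial (Fin n) ℝ} {l₁ l₂ : ℝ} (hl₁ : 0 < l₁) (hl₂ : 0 < l₂)
    (h₁ : ∫⁻ x, B (|u x - MvPolynomial.eval (fun i => x i) P| / l₁) ≤ 1)
    (h₂ : ∫⁻ x, B (|u x - MvPolynomial.eval (fun i => x i) Q| / l₂) ≤ 1) : P = Q := by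
  have hL : 0 < max l₁ l₂ := lt_max_of_lt_left hl₁
  refine sub_eq_zero.1 (poly_zero_of_finite hn hB hpos (l := 2 * max l₁ l₂) (by positivity) ?_)
  have hmeas : AEMeasurable (fun x => ENNReal.ofReal (1/2) *
      B (|u x - MvPolynomial.eval (fun i => x i) P| / l₁)) volume := by
    have := (young_measurable hB).comp_aemeasurable
      ((hu.sub (continuous_eval P).measurable.aemeasurable).div_const l₁)
    simp only [Function.comp_def, abs_div, abs_of_pos hl₁] at this
    exact this.const_mul _
  refine ne_top_of_le_ne_top (b := ENNReal.ofReal (1/2) * 1 + ENNReal.ofReal (1/2) * 1)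
    (by simp) ?_
  calc _ ≤ ∫⁻ x, (ENNReal.ofReal (1/2) * B (|u x - MvPolynomial.eval (fun i => x i) P| / l₁) +
        ENNReal.ofReal (1/2) * B (|u x - MvPolynomial.eval (fun i => x i) Q| / l₂)) := by
        refine lintegral_mono fun x => (hB.2.1 (abs_nonneg _) ?_).trans
          (hB.2.2.1 (by positivity) (by positivity) (by norm_num) (by norm_num) (by norm_num))
        set a := MvPolynomial.eval (fun i => x i) P with ha
        set b := MvPolynomial.eval (fun i => x i) Q with hb
        rw [map_sub, ← ha, ← hb, abs_div, abs_of_pos (by positivity : 0 < 2 * max l₁ l₂)]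
        have e1 : |u x - a| / max l₁ l₂ ≤ |u x - a| / l₁ := by gcongr; exact le_max_left _ _
        have e2 : |u x - b| / max l₁ l₂ ≤ |u x - b| / l₂ := by gcongr; exact le_max_right _ _
        have e3 : |a - b| ≤ |u x - a| + |u x - b| := by
          rw [abs_sub_comm (u x) a]; exact abs_sub_le _ _ _
        calc |a - b| / (2 * max l₁ l₂) ≤ (|u x - a| + |u x - b|) / (2 * max l₁ l₂) := by gcongr
          _ = 1/2 * (|u x - a| / max l₁ l₂) + 1/2 * (|u x - b| / max l₁ l₂) := by
            field_simp
          _ ≤ _ := by gcongr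
    _ = ENNReal.ofReal (1/2) * (∫⁻ x, B (|u x - MvPolynomial.eval (fun i => x i) P| / l₁)) +
        ENNReal.ofReal (1/2) * ∫⁻ x, B (|u x - MvPolynomial.eval (fun i => x i) Q| / l₂) := by
        rw [lintegral_add_left' hmeas, lintegral_const_mul' _ _ ENNReal.ofReal_ne_top,
          lintegral_const_mul' _ _ ENNReal.ofReal_ne_top]
    _ ≤ _ := by gcongr

lemma exists_of_luxNorm_lt_top {n : ℕ} {B : ℝ → ℝ≥0∞} {f : Euc n → ℝ}
    (h : luxNorm B volume f < ⊤) : ∃ l : ℝ, 0 < l ∧ ∫⁻ x, B (|f x| / l) ≤ 1 := by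
  obtain ⟨_, ⟨l, hl, rfl, hl'⟩, -⟩ := sInf_lt_iff.1 h
  exact ⟨l, hl, hl'⟩

/-- Passage from modulars to Luxemburg norms: the modular inequality is applied to all admissible
multiples of `u`, and uniqueness makes the resulting polynomial independent of the multiple. -/
lemma norm_of_modular {n m : ℕ} (hn : n ≠ 0) {A B : ℝ → ℝ≥0∞} (hB : IsYoungFunction B)
    (hpos : ∀ t, 0 < t → B t ≠ 0) {C₀ : ℝ} (hC₀ : 0 < C₀)
    (h : ∀ (u : Euc n → ℝ) (D : ∀ k : ℕ, (Fin k → Fin n) → Euc n → ℝ),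
      HasWeakDerivs n m u D → ∫⁻ x, A (gradAbs n m D x) ≤ 1 →
      ∃ P : MvPolynomial (Fin n) ℝ, P.totalDegree ≤ m - 1 ∧
        ∫⁻ x, B (|u x - MvPolynomial.eval (fun i => x i) P| / C₀) ≤ 1)
    (u : Euc n → ℝ) (D : ∀ k : ℕ, (Fin k → Fin n) → Euc n → ℝ) (hu : HasWeakDerivs n m u D)
    (hlt : luxNorm A volume (gradAbs n m D) < ⊤) :
    ∃ P : MvPolynomial (Fin n) ℝ, P.totalDegree ≤ m - 1 ∧
      luxNorm B volume (fun x => u x - MvPolynomial.eval (fun i => x i) P) ≤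
        ENNReal.ofReal C₀ * luxNorm A volume (gradAbs n m D) ∧
      ∀ Q : MvPolynomial (Fin n) ℝ, Q.totalDegree ≤ m - 1 →
        luxNorm B volume (fun x => u x - MvPolynomial.eval (fun i => x i) Q) ≤
          ENNReal.ofReal C₀ * luxNorm A volume (gradAbs n m D) → Q = P := by
  have hum : AEMeasurable u volume := hu.1.aestronglyMeasurable.aemeasurable
  have hscale : ∀ l : ℝ, 0 < l → ∫⁻ x, A (|gradAbs n m D x| / l) ≤ 1 →
      ∃ P : MvPolynomial (Fin n) ℝ, P.totalDegree ≤ m - 1 ∧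
        ∫⁻ x, B (|u x - MvPolynomial.eval (fun i => x i) P| / (C₀ * l)) ≤ 1 := by
    intro l hl hl1
    have e : ∀ x, gradAbs n m (fun k a x => l⁻¹ * D k a x) x = |gradAbs n m D x| / l := by
      intro x
      rw [abs_of_nonneg (gradAbs_nonneg D x), div_eq_inv_mul]
      simp only [gradAbs, abs_mul, Finset.mul_sum, abs_of_pos (inv_pos.2 hl)]
    obtain ⟨P, hP, hP'⟩ := h _ _ (hasWeakDerivs_smul hu l⁻¹) (by simpa only [e] using hl1)
    refine ⟨MvPolynomial.C l * P, ?_, ?_⟩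
    · refine (MvPolynomial.totalDegree_mul _ _).trans ?_
      simpa using hP
    · refine (lintegral_congr fun x => ?_).trans_le hP'
      congr 1
      have : l⁻¹ * u x - MvPolynomial.eval (fun i => x i) P =
          l⁻¹ * (u x - l * MvPolynomial.eval (fun i => x i) P) := by field_simp
      rw [map_mul, MvPolynomial.eval_C, this, abs_mul, abs_of_pos (inv_pos.2 hl)]
      field_simp
  obtain ⟨l₀, hl₀, h₀⟩ := exists_of_luxNorm_lt_top hlt
  obtain ⟨P, hP, hP'⟩ := hscale l₀ hl₀ h₀
  refine ⟨P, hP, ?_, fun Q _ hQ => ?_⟩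
  · rw [mul_comm, ← ENNReal.div_le_iff_le_mul (by simp [hC₀]) (by simp)]
    refine le_sInf ?_
    rintro _ ⟨l, hl, rfl, hl1⟩
    obtain ⟨P₁, -, hP₁⟩ := hscale l hl hl1
    rw [poly_unique hn hB hpos hum (by positivity) (by positivity) hP' hP₁,
      ENNReal.div_le_iff_le_mul (by simp [hC₀]) (by simp), mul_comm, ← ENNReal.ofReal_mul hC₀.le]
    exact sInf_le ⟨C₀ * l, by positivity, rfl, hP₁⟩
  · obtain ⟨l, hl, hl1⟩ := exists_of_luxNorm_lt_top
      (hQ.trans_lt (ENNReal.mul_lt_top ENNReal.ofReal_lt_top hlt))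
    exact poly_unique hn hB hpos hum hl (by positivity) hl1 hP'

/-- The exponents of the target space are conjugate to those of `A`. -/
lemma exponent_conj {n m : ℕ} (hm : 0 < m) (hmn : m < n) {p : ℝ} (hp1 : 1 < p)
    (hp : p < (n : ℝ) / m) (α : ℝ) :
    0 < 1 - (m:ℝ) / n * p ∧ (n * p) / ((n : ℝ) - m * p) * (1 - (m:ℝ) / n * p) = p ∧
      (n * α) / ((n : ℝ) - m * p) * (1 - (m:ℝ) / n * p) = α ∧
      1 < (n * p) / ((n : ℝ) - m * p) := by
  have hm' : (0:ℝ) < m := by exact_mod_cast hm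
  have hn' : (0:ℝ) < n := by exact_mod_cast hm.trans hmn
  have h1 : 0 < (n:ℝ) - m * p := by
    rw [lt_div_iff₀ hm'] at hp; linarith
  have e : 1 - (m:ℝ) / n * p = ((n:ℝ) - m * p) / n := by field_simp
  rw [e]
  have h2 := h1.ne'
  refine ⟨by positivity, by
    rw [div_mul_div_comm, mul_comm (n:ℝ) p, mul_assoc, mul_comm (n:ℝ),
      mul_div_cancel_right₀ _ (by positivity)], by
    rw [div_mul_div_comm, mul_comm (n:ℝ) α, mul_assoc, mul_comm (n:ℝ),
      mul_div_cancel_right₀ _ (by positivity)], ?_⟩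
  rw [lt_div_iff₀ h1]
  nlinarith [mul_pos hm' (by linarith : 0 < p)]

/-- Orlicz Poincaré–Sobolev inequality for Zygmund-type Young functions:
if A is equivalent near 0 to t^{p₀}(1−log t)^{α₀} with p₀ ∈ (1, n/m) and near ∞ to
t^{p∞}(1+log t)^{α∞} with p∞ ∈ (1, n/m), then there are a Young function B with the stated
equivalences and a constant C such that every u ∈ V^m L^A(ℝⁿ) admits a unique polynomial P
of degree ≤ m−1 with ‖u − P‖_{L^B} ≤ C‖∇^m u‖_{L^A}. -/
theorem stmt_16 (n m : ℕ) (hn : 2 ≤ n) (hm : 0 < m) (hmn : m < n)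
    (p₀ pi α₀ αi : ℝ) (hp₀ : 1 < p₀ ∧ p₀ < (n : ℝ) / m) (hpi : 1 < pi ∧ pi < (n : ℝ) / m)
    (A : ℝ → ℝ≥0∞) (hA : IsYoungFunction A)
    (hA0 : EquivNearZero A (fun t => ENNReal.ofReal (t ^ p₀ * (1 - Real.log t) ^ α₀)))
    (hAi : EquivNearInfty A (fun t => ENNReal.ofReal (t ^ pi * (1 + Real.log t) ^ αi))) :
    ∃ B : ℝ → ℝ≥0∞, IsYoungFunction B ∧
      EquivNearZero B (fun t => ENNReal.ofReal
        (t ^ ((n * p₀) / ((n : ℝ) - m * p₀)) *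
          (1 - Real.log t) ^ ((n * α₀) / ((n : ℝ) - m * p₀)))) ∧
      EquivNearInfty B (fun t => ENNReal.ofReal
        (t ^ ((n * pi) / ((n : ℝ) - m * pi)) *
          (1 + Real.log t) ^ ((n * αi) / ((n : ℝ) - m * pi)))) ∧
      ∃ C : ℝ, 0 < C ∧
        ∀ (u : Euc n → ℝ) (D : ∀ k : ℕ, (Fin k → Fin n) → Euc n → ℝ),
          HasWeakDerivs n m u D →
          luxNorm A volume (gradAbs n m D) < ⊤ →
          ∃ P : MvPolynomial (Fin n) ℝ, P.totalDegree ≤ m - 1 ∧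
            luxNorm B volume (fun x => u x - MvPolynomial.eval (fun i => x i) P) ≤
              ENNReal.ofReal C * luxNorm A volume (gradAbs n m D) ∧
            ∀ Q : MvPolynomial (Fin n) ℝ, Q.totalDegree ≤ m - 1 →
              luxNorm B volume (fun x => u x - MvPolynomial.eval (fun i => x i) Q) ≤
                ENNReal.ofReal C * luxNorm A volume (gradAbs n m D) → Q = P := by
  obtain ⟨hμ, hb, hβ, hb1⟩ := exponent_conj hm hmn hp₀.1 hp₀.2 α₀
  obtain ⟨hμ', hb', hβ', hb1'⟩ := exponent_conj hm hmn hpi.1 hpi.2 αi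
  set b := (n * p₀) / ((n : ℝ) - m * p₀)
  set b' := (n * pi) / ((n : ℝ) - m * pi)
  set β := (n * α₀) / ((n : ℝ) - m * p₀)
  set β' := (n * αi) / ((n : ℝ) - m * pi)
  have hm' : (0:ℝ) < m := by exact_mod_cast hm
  -- `F` and `G` are the models of `A` and of the target function `B`.
  set F := zyg p₀ α₀ pi αi with hF
  set G := zyg b β b' β' with hG
  have hFpos : ∀ t, 0 < t → 0 < F t := fun t ht => zyg_pos _ _ _ _ ht
  have hGpos : ∀ t, 0 < t → 0 < G t := fun t ht => zyg_pos _ _ _ _ ht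
  -- `q` and `r` lie between `1` and the exponents, `ρ` between the exponents of `A` and `n / m`;
  -- these margins absorb the logarithmic factors.
  obtain ⟨q, hq1, hq⟩ := exists_between (lt_min hp₀.1 hpi.1)
  obtain ⟨ρ, hρ, hρn⟩ := exists_between (max_lt hp₀.2 hpi.2)
  obtain ⟨r, hr1, hr⟩ := exists_between (lt_min hb1 hb1')
  have hFlow : LowGrowth F q :=
    zyg_low _ _ _ _ _ (hq.trans_le (min_le_left _ _)) (hq.trans_le (min_le_right _ _))
  have hFup : UpGrowth F ρ :=
    zyg_up _ _ _ _ _ ((le_max_left _ _).trans_lt hρ) ((le_max_right _ _).trans_lt hρ)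
  have hGlow : LowGrowth G r :=
    zyg_low _ _ _ _ _ (hr.trans_le (min_le_left _ _)) (hr.trans_le (min_le_right _ _))
  have hGup : UpGrowth G (b + b') := zyg_up _ _ _ _ _ (by linarith) (by linarith)
  have hρ0 : 0 < ρ := by linarith [(le_max_left p₀ pi).trans_lt hρ]
  obtain ⟨hgood, K, hK, hAF⟩ := good_of_comp hA hFpos hFlow hFup
    (comp_of_equiv (by linarith) (by linarith) hA.2.1 hA0 hAi)
  have hcomp : Comp (youngOf G) G := youngOf_comp hr1 (by linarith) hGpos hGlow hGup
  have hB : IsYoungFunction (youngOf G) := youngOf_young (measurable_zyg _ _ _ _) hGpos hcomp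
  obtain ⟨hB0, hBi⟩ := Comp.equiv (by linarith) (by linarith) hB.1 hcomp
  obtain ⟨L, hL, hBG⟩ := hcomp
  have hBpos : ∀ t, 0 < t → youngOf G t ≠ 0 := by
    intro t ht h0
    have := (hBG t ht).1
    rw [h0, mul_zero] at this
    exact absurd (hGpos t ht) (not_lt.2 (by simpa using this))
  -- `zyg_conj`, transferred from the models to the Young functions themselves.
  have hAB : ∀ C : ℝ, 0 < C → ∃ K : ℝ, 0 < K ∧ ∀ l : ℝ, 0 < l →
      youngOf G (C * (l * realOf A l ^ (-((m:ℝ) / n)))) ≤ ENNReal.ofReal K * A l := by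
    intro C hC
    obtain ⟨M, hM, hconj⟩ := zyg_conj p₀ α₀ pi αi b β b' β' ((m:ℝ) / n) hμ hb hβ hμ' hb' hβ'
      (by linarith) (by linarith) (C * K ^ |(-((m:ℝ) / n))|) (by positivity)
    refine ⟨L * M * K, by positivity, fun l hl => ?_⟩
    have hAl := hgood.pos l hl
    have hFl := hFpos l hl
    have h1 := rpow_le_of_comparable (-((m:ℝ) / n)) hFl hAl hK (hAF l hl).2 (hAF l hl).1
    calc youngOf G (C * (l * realOf A l ^ (-((m:ℝ) / n)))) ≤
          youngOf G (C * K ^ |(-((m:ℝ) / n))| * (l * F l ^ (-((m:ℝ) / n)))) := by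
          refine youngOf_mono G ?_
          calc _ ≤ C * (l * (K ^ |(-((m:ℝ) / n))| * F l ^ (-((m:ℝ) / n)))) := by gcongr
            _ = _ := by ring
      _ ≤ ENNReal.ofReal (L * G (C * K ^ |(-((m:ℝ) / n))| * (l * F l ^ (-((m:ℝ) / n))))) :=
          (hBG _ (by positivity)).2
      _ ≤ ENNReal.ofReal (L * (M * (K * realOf A l))) := by
          gcongr
          refine (hconj l hl).trans ?_
          gcongr
          exact (hAF l hl).1
      _ = ENNReal.ofReal (L * M * K) * A l := by
          rw [← realOf_eq hgood.fin hl.le, ← ENNReal.ofReal_mul (by positivity)]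
          ring_nf
  obtain ⟨C₀, hC₀, hmod⟩ := weak_modular hm hq1 hρ0 (by
    rw [lt_div_iff₀ hm'] at hρn; linarith) hgood hB hBpos hAB
  exact ⟨youngOf G, hB, hB0, hBi, C₀, hC₀, norm_of_modular (by omega) hB hBpos hC₀ hmod⟩
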